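/- Let Ω ⊆ ℝ^n be a bounded open set with Lipschitz boundary, s ∈ (0,1), and let E ⊆ ℝ^n be measurable. Then P_s(E,Ω) equals the infimum of liminf_{h→∞} P_s(E_h,Ω) taken over all sequences (E_h) of open sets with smooth boundary such that E_h →loc E. -/

import Mathlib

open MeasureTheory Set Filter Topology Metric Bornology
open scoped ENNReal NNReal symmDiff

noncomputable def Ls (n : ℕ) (s : ℝ) (A B : Set (EuclideanSpace ℝ (Fin n))) : ℝ≥0∞ :=
  ∫⁻ x in A, ∫⁻ y in B, ENNReal.ofReal (dist x y ^ (-((n : ℝ) + s)))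

noncomputable def Ps (n : ℕ) (s : ℝ) (E Ω : Set (EuclideanSpace ℝ (Fin n))) : ℝ≥0∞ :=
  Ls n s (E ∩ Ω) (Eᶜ ∩ Ω) + Ls n s (E ∩ Ω) (Eᶜ \ Ω) + Ls n s (E \ Ω) (Eᶜ ∩ Ω)

def LocConv (n : ℕ) (A : ℕ → Set (EuclideanSpace ℝ (Fin n)))
    (B : Set (EuclideanSpace ℝ (Fin n))) : Prop :=
  ∀ K : Set (EuclideanSpace ℝ (Fin n)), IsBounded K →
    Tendsto (fun h => volume ((A h ∆ B) ∩ K)) atTop (𝓝 0)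

def HasSmoothBoundary {n : ℕ} (E : Set (EuclideanSpace ℝ (Fin n))) : Prop :=
  ∃ (f : EuclideanSpace ℝ (Fin n) → ℝ) (t : ℝ), ContDiff ℝ (⊤ : ℕ∞) f ∧
    (∀ x, f x = t → fderiv ℝ f x ≠ 0) ∧ E = {x | t < f x}

def HasLipschitzBoundary {n : ℕ} (Ω : Set (EuclideanSpace ℝ (Fin n))) : Prop :=
  ∀ x ∈ frontier Ω, ∃ (U : Set (EuclideanSpace ℝ (Fin n)))
    (_ : IsOpen U) (_ : x ∈ U)
    (L : EuclideanSpace ℝ (Fin n) ≃ₗᵢ[ℝ] WithLp 2 (EuclideanSpace ℝ (Fin (n - 1)) × ℝ))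
    (φ : EuclideanSpace ℝ (Fin (n - 1)) → ℝ) (K : NNReal),
    LipschitzWith K φ ∧
    Ω ∩ U = {y ∈ U | φ (WithLp.equiv 2 _ (L y)).1 < (WithLp.equiv 2 _ (L y)).2} ∧
    frontier Ω ∩ U = {y ∈ U | φ (WithLp.equiv 2 _ (L y)).1 = (WithLp.equiv 2 _ (L y)).2}

/-!
The fractional perimeter of `E` is the value on `E ×ˢ Eᶜ` of a measure on pairs of points, so it is
lower semicontinuous along almost everywhere convergent sequences by Fatou's lemma, and local
convergence provides such a subsequence.

For the recovery sequence, split this measure into its part on `Ω ×ˢ Ω` and the part coupling `Ω`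
with `Ωᶜ`. The Lipschitz boundary makes the second part finite, since translating `Ω` by `h` moves
a volume of order `‖h‖` across its boundary, so dominated convergence takes care of it. For the
first part, a smooth map close to the identity pushes `closure Ω` into `Ω`, and so do its small
translates `Φ`. Each preimage `Φ⁻¹(E)` has almost the same energy in `Ω` as `E` and is close to
`E`. Averaging their indicators over the translations yields a smooth function whose nonlocal total
variation is at most a little more than the energy of `E`. By Sard's theorem for its gradient, a
small linear perturbation has only countably many critical values, and the coarea formula then
selects a regular level in `(δ, 1 - δ)` whose superlevel set has almost no more energy than `E`.
-/

section InteractionMeasure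

variable {X : Type*} [MeasurableSpace X] {μ : Measure X}

section RieszMeasure

variable [PseudoMetricSpace X]

/-- The measure `dist x y ^ (-α) dμ(x) dμ(y)` on pairs of points. Its value on `A ×ˢ B` is the
interaction of `A` and `B` through the Riesz kernel of exponent `α`. -/
noncomputable def rieszMeasure (μ : Measure X) (α : ℝ) : Measure (X × X) :=
  (μ.prod μ).withDensity fun p => ENNReal.ofReal (dist p.1 p.2 ^ (-α))

lemma rieszMeasure_absolutelyContinuous (α : ℝ) : rieszMeasure μ α ≪ μ.prod μ :=
  withDensity_absolutelyContinuous _ _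

instance [SFinite μ] (α : ℝ) : SFinite (rieszMeasure μ α) :=
  inferInstanceAs (SFinite ((μ.prod μ).withDensity _))

variable [SecondCountableTopology X] [OpensMeasurableSpace X]

lemma measurable_ofReal_dist_rpow (α : ℝ) :
    Measurable fun p : X × X => ENNReal.ofReal (dist p.1 p.2 ^ (-α)) := by
  fun_prop

lemma rieszMeasure_prod [SFinite μ] (α : ℝ) (A B : Set X) :
    rieszMeasure μ α (A ×ˢ B) =
      ∫⁻ x in A, ∫⁻ y in B, ENNReal.ofReal (dist x y ^ (-α)) ∂μ ∂μ := by
  rw [rieszMeasure, withDensity_apply', ← Measure.prod_restrict,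
    lintegral_prod _ (measurable_ofReal_dist_rpow α).aemeasurable]

lemma rieszMeasure_preimage_swap [SFinite μ] (α : ℝ) {S : Set (X × X)} (hS : MeasurableSet S) :
    rieszMeasure μ α (Prod.swap ⁻¹' S) = rieszMeasure μ α S := by
  rw [rieszMeasure, withDensity_apply', withDensity_apply',
    ← (Measure.measurePreserving_swap (μ := μ) (ν := μ)).setLIntegral_comp_preimage hS
      (measurable_ofReal_dist_rpow α)]
  simp only [Prod.fst_swap, Prod.snd_swap, dist_comm]

end RieszMeasure

lemma measure_le_liminf_of_ae_eventually_mem {S : Set X} {Sh : ℕ → Set X}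
    (hS : MeasurableSet S) (hSh : ∀ h, MeasurableSet (Sh h))
    (h : ∀ᵐ x ∂μ, x ∈ S → ∀ᶠ h in atTop, x ∈ Sh h) :
    μ S ≤ liminf (fun h => μ (Sh h)) atTop := by
  simp_rw [← fun h => lintegral_indicator_one (μ := μ) (hSh h), ← lintegral_indicator_one hS]
  refine (lintegral_mono_ae ?_).trans
    (lintegral_liminf_le fun h => measurable_one.indicator (hSh h))
  filter_upwards [h] with x hx
  refine indicator_apply_le' (fun hxS => le_liminf_of_le (by isBoundedDefault) ?_)
    fun _ => zero_le
  filter_upwards [hx hxS] with k hk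
  rw [indicator_of_mem hk]

lemma ae_eventually_mem_prod_compl_iff [SFinite μ] {m : Measure (X × X)} (hm : m ≪ μ.prod μ)
    {E : Set X} {Eh : ℕ → Set X} (h : ∀ᵐ x ∂μ, ∀ᶠ h in atTop, (x ∈ Eh h ↔ x ∈ E)) :
    ∀ᵐ p ∂m, ∀ᶠ h in atTop, (p ∈ Eh h ×ˢ (Eh h)ᶜ ↔ p ∈ E ×ˢ Eᶜ) := by
  filter_upwards [hm.ae_le (Measure.quasiMeasurePreserving_fst.ae h),
    hm.ae_le (Measure.quasiMeasurePreserving_snd.ae h)] with p h₁ h₂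
  filter_upwards [h₁, h₂] with k hk₁ hk₂
  simp only [mem_prod, mem_compl_iff, hk₁, hk₂]

lemma measure_prod_compl_le_liminf [SFinite μ] {m : Measure (X × X)} (hm : m ≪ μ.prod μ)
    {E : Set X} {Eh : ℕ → Set X} (hE : MeasurableSet E) (hEh : ∀ h, MeasurableSet (Eh h))
    (h : ∀ᵐ x ∂μ, ∀ᶠ h in atTop, (x ∈ Eh h ↔ x ∈ E)) :
    m (E ×ˢ Eᶜ) ≤ liminf (fun h => m (Eh h ×ˢ (Eh h)ᶜ)) atTop := by
  refine measure_le_liminf_of_ae_eventually_mem (hE.prod hE.compl)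
    (fun h => (hEh h).prod (hEh h).compl) ?_
  filter_upwards [ae_eventually_mem_prod_compl_iff hm h] with p hp hpE
  filter_upwards [hp] with k hk using hk.2 hpE

lemma tendsto_measure_prod_compl [SFinite μ] {m : Measure (X × X)} [IsFiniteMeasure m]
    (hm : m ≪ μ.prod μ) {E : Set X} {Eh : ℕ → Set X} (hE : MeasurableSet E)
    (hEh : ∀ h, MeasurableSet (Eh h)) (h : ∀ᵐ x ∂μ, ∀ᶠ h in atTop, (x ∈ Eh h ↔ x ∈ E)) :
    Tendsto (fun h => m (Eh h ×ˢ (Eh h)ᶜ)) atTop (𝓝 (m (E ×ˢ Eᶜ))) :=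
  tendsto_measure_of_ae_tendsto_indicator_of_isFiniteMeasure atTop (hE.prod hE.compl)
    (fun h => (hEh h).prod (hEh h).compl) (ae_eventually_mem_prod_compl_iff hm h)

end InteractionMeasure

section FractionalPerimeter

variable {n : ℕ} {s : ℝ} {E Ω : Set (EuclideanSpace ℝ (Fin n))}

/-- The pairs of points over which `Ps n s E Ω` integrates, with the Riesz kernel as density:
`Ps n s E Ω` is the value of this measure on `E ×ˢ Eᶜ`. -/
noncomputable def perimeterMeasure (n : ℕ) (s : ℝ) (Ω : Set (EuclideanSpace ℝ (Fin n))) :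
    Measure (EuclideanSpace ℝ (Fin n) × EuclideanSpace ℝ (Fin n)) :=
  (rieszMeasure volume (n + s)).restrict (Ω ×ˢ Ω) +
    (rieszMeasure volume (n + s)).restrict (Ω ×ˢ Ωᶜ ∪ Ωᶜ ×ˢ Ω)

lemma perimeterMeasure_absolutelyContinuous :
    perimeterMeasure n s Ω ≪ Measure.prod volume volume :=
  (Measure.absolutelyContinuous_of_le Measure.restrict_le_self).add_left
    (Measure.absolutelyContinuous_of_le Measure.restrict_le_self)
    |>.trans (rieszMeasure_absolutelyContinuous _)

lemma Ps_eq_perimeterMeasure (hE : MeasurableSet E) (hΩ : MeasurableSet Ω) :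
    Ps n s E Ω = perimeterMeasure n s Ω (E ×ˢ Eᶜ) := by
  have hLs (A B : Set (EuclideanSpace ℝ (Fin n))) :
      Ls n s A B = rieszMeasure volume (n + s) (A ×ˢ B) := (rieszMeasure_prod _ A B).symm
  have hcross : E ×ˢ Eᶜ ∩ (Ω ×ˢ Ωᶜ ∪ Ωᶜ ×ˢ Ω) =
      (E ∩ Ω) ×ˢ (Eᶜ \ Ω) ∪ (E \ Ω) ×ˢ (Eᶜ ∩ Ω) := by
    rw [inter_union_distrib_left, prod_inter_prod, prod_inter_prod, sdiff_eq, sdiff_eq]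
  have hdisj : Disjoint ((E ∩ Ω) ×ˢ (Eᶜ \ Ω)) ((E \ Ω) ×ˢ (Eᶜ ∩ Ω)) :=
    Disjoint.set_prod_left (disjoint_sdiff_right.mono_left inter_subset_right) _ _
  rw [perimeterMeasure, Measure.add_apply, Measure.restrict_apply (hE.prod hE.compl),
    Measure.restrict_apply (hE.prod hE.compl), prod_inter_prod, hcross,
    measure_union hdisj ((hE.diff hΩ).prod (hE.compl.inter hΩ)), Ps, hLs, hLs, hLs, add_assoc]

end FractionalPerimeter

section LocalConvergence

lemma ae_eventually_mem_iff_of_measure_inter_ball_le {X : Type*} [PseudoMetricSpace X]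
    [MeasurableSpace X] {μ : Measure X} (x₀ : X) {Eh : ℕ → Set X} {E : Set X}
    (h : ∀ k : ℕ, μ ((Eh k ∆ E) ∩ ball x₀ k) ≤ 2⁻¹ ^ k) :
    ∀ᵐ x ∂μ, ∀ᶠ k in atTop, (x ∈ Eh k ↔ x ∈ E) := by
  have hsum : ∑' k : ℕ, μ ((Eh k ∆ E) ∩ ball x₀ k) ≠ ∞ :=
    ne_top_of_le_ne_top (by simp [ENNReal.tsum_geometric]) (ENNReal.tsum_le_tsum h)
  filter_upwards [ae_eventually_notMem hsum] with x hx
  obtain ⟨N, hN⟩ := exists_nat_gt (dist x x₀)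
  filter_upwards [hx, eventually_ge_atTop N] with k hk hkN
  have hball : x ∈ ball x₀ k := mem_ball.2 (hN.trans_le (by exact_mod_cast hkN))
  by_contra hc
  exact hk ⟨by rw [mem_symmDiff]; tauto, hball⟩

variable {n : ℕ} {Eh : ℕ → Set (EuclideanSpace ℝ (Fin n))} {E : Set (EuclideanSpace ℝ (Fin n))}

lemma LocConv.comp_strictMono (h : LocConv n Eh E) {φ : ℕ → ℕ} (hφ : StrictMono φ) :
    LocConv n (Eh ∘ φ) E :=
  fun K hK => (h K hK).comp hφ.tendsto_atTop

lemma LocConv.exists_subseq_ae (h : LocConv n Eh E) :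
    ∃ φ : ℕ → ℕ, StrictMono φ ∧ ∀ᵐ x, ∀ᶠ k in atTop, (x ∈ Eh (φ k) ↔ x ∈ E) := by
  have hfast (k : ℕ) : ∀ᶠ m in atTop, volume ((Eh m ∆ E) ∩ ball 0 (k : ℝ)) ≤ 2⁻¹ ^ k :=
    (h _ isBounded_ball).eventually_le_const (ENNReal.pow_pos (by simp) k)
  obtain ⟨φ, hφ, hφ'⟩ := extraction_forall_of_eventually hfast
  exact ⟨φ, hφ, ae_eventually_mem_iff_of_measure_inter_ball_le 0 hφ'⟩

lemma locConv_of_volume_inter_ball_le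
    (h : ∀ k : ℕ, volume ((Eh k ∆ E) ∩ ball 0 k) ≤ 2⁻¹ ^ k) : LocConv n Eh E := by
  intro K hK
  obtain ⟨R, hR⟩ := hK.subset_ball 0
  refine tendsto_of_tendsto_of_tendsto_of_le_of_le' tendsto_const_nhds
    (ENNReal.tendsto_pow_atTop_nhds_zero_of_lt_one (r := 2⁻¹) (by simp))
    (Eventually.of_forall fun _ => zero_le) ?_
  filter_upwards [eventually_ge_atTop ⌈R⌉₊] with k hk
  exact (measure_mono <| inter_subset_inter_right _ <|
    hR.trans (ball_subset_ball (Nat.ceil_le.1 hk))).trans (h k)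

end LocalConvergence

section LowerSemicontinuity

lemma le_liminf_of_forall_exists_subseq {β : Type*} [CompleteLinearOrder β] [DenselyOrdered β]
    {u : ℕ → β} {a : β}
    (h : ∀ φ : ℕ → ℕ, StrictMono φ → ∃ ψ : ℕ → ℕ, a ≤ liminf (u ∘ φ ∘ ψ) atTop) :
    a ≤ liminf u atTop := by
  by_contra! hlt
  obtain ⟨c, hc, hca⟩ := exists_between hlt
  obtain ⟨φ, hφ, hφc⟩ := extraction_of_frequently_atTop
    (frequently_lt_of_liminf_lt (by isBoundedDefault) hc)
  obtain ⟨ψ, hψ⟩ := h φ hφ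
  have hle : liminf (u ∘ φ ∘ ψ) atTop ≤ c :=
    (liminf_le_liminf (Eventually.of_forall fun k => (hφc (ψ k)).le)).trans (liminf_const c).le
  exact hca.not_ge (hψ.trans hle)

variable {n : ℕ} {s : ℝ} {Eh : ℕ → Set (EuclideanSpace ℝ (Fin n))}
  {E Ω : Set (EuclideanSpace ℝ (Fin n))}

lemma HasSmoothBoundary.measurableSet (h : HasSmoothBoundary E) : MeasurableSet E := by
  obtain ⟨f, t, hf, -, rfl⟩ := h
  exact (isOpen_lt continuous_const hf.continuous).measurableSet

theorem LocConv.Ps_le_liminf (h : LocConv n Eh E) (hΩ : MeasurableSet Ω) (hE : MeasurableSet E)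
    (hEh : ∀ k, MeasurableSet (Eh k)) : Ps n s E Ω ≤ liminf (fun k => Ps n s (Eh k) Ω) atTop := by
  refine le_liminf_of_forall_exists_subseq fun φ hφ => ?_
  obtain ⟨ψ, -, hae⟩ := (h.comp_strictMono hφ).exists_subseq_ae
  simp only [Function.comp_def, Ps_eq_perimeterMeasure hE hΩ,
    fun k => Ps_eq_perimeterMeasure (n := n) (s := s) (hEh k) hΩ]
  exact ⟨ψ, measure_prod_compl_le_liminf perimeterMeasure_absolutelyContinuous hE
    (fun k => hEh (φ (ψ k))) hae⟩

end LowerSemicontinuity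

section LipschitzCharts

variable {V : Type*} [NormedAddCommGroup V] [NormedSpace ℝ V] {Ω : Set V}

/-- A description of `Ω` near a boundary point as one side of a Lipschitz graph over the
hyperplanes transversal to the unit vector `dir`. The graph is encoded by its signed height
function, which grows at unit speed along `dir`, is positive on `Ω` and vanishes on `frontier Ω`.
It is valid on the ball of radius `2 * radius`, which leaves room for moving points around. -/
structure LipschitzChart (Ω : Set V) where
  center : V
  radius : ℝ
  dir : V
  height : V → ℝ
  lipschitzConst : ℝ≥0
  radius_pos : 0 < radius
  norm_dir : ‖dir‖ = 1
  lipschitzWith_height : LipschitzWith lipschitzConst height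
  height_add_smul_dir : ∀ y t, height (y + t • dir) = height y + t
  mem_iff : ∀ y ∈ ball center (2 * radius), y ∈ Ω ↔ 0 < height y
  mem_frontier_iff : ∀ y ∈ ball center (2 * radius), y ∈ frontier Ω ↔ height y = 0

lemma HasLipschitzBoundary.exists_chart {n : ℕ} {Ω : Set (EuclideanSpace ℝ (Fin n))}
    (hΩ : HasLipschitzBoundary Ω) {x : EuclideanSpace ℝ (Fin n)} (hx : x ∈ frontier Ω) :
    ∃ c : LipschitzChart Ω, c.center = x := by
  obtain ⟨U, hU, hxU, L, φ, K, hφ, hΩU, hfrU⟩ := hΩ x hx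
  obtain ⟨r, hr, hrU⟩ := Metric.isOpen_iff.1 hU x hxU
  rw [← mul_div_cancel₀ r two_ne_zero] at hrU
  have hfst : LipschitzWith 1 fun y => (L y).fst :=
    .of_dist_le_mul fun a b => by
      simpa [dist_eq_norm, ← L.norm_map (a - b)] using WithLp.norm_fst_le _ (L (a - b))
  have hsnd : LipschitzWith 1 fun y => (L y).snd :=
    .of_dist_le_mul fun a b => by
      simpa [dist_eq_norm, ← L.norm_map (a - b)] using WithLp.norm_snd_le _ (L (a - b))
  refine ⟨{ center := x
            radius := r / 2
            dir := L.symm (WithLp.toLp 2 (0, 1))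
            height := fun y => (L y).snd - φ (L y).fst
            lipschitzConst := 1 + K * 1
            radius_pos := half_pos hr
            norm_dir := by simp
            lipschitzWith_height := hsnd.sub (hφ.comp hfst)
            height_add_smul_dir := fun y t => by simp; ring
            mem_iff := fun y hy => ?_
            mem_frontier_iff := fun y hy => ?_ }, rfl⟩
  · have := Set.ext_iff.1 hΩU y
    simpa [hrU hy] using this
  · have := Set.ext_iff.1 hfrU y
    rw [sub_eq_zero, eq_comm]
    simpa [hrU hy] using this

lemma HasLipschitzBoundary.exists_finset_charts {n : ℕ} {Ω : Set (EuclideanSpace ℝ (Fin n))}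
    (hΩ : HasLipschitzBoundary Ω) (hΩb : IsBounded Ω) :
    ∃ T : Finset (LipschitzChart Ω), frontier Ω ⊆ ⋃ c ∈ T, ball c.center c.radius := by
  have hcomp : IsCompact (frontier Ω) :=
    isCompact_of_isClosed_isBounded isClosed_frontier
      (hΩb.closure.subset frontier_subset_closure)
  refine hcomp.elim_finite_subcover _ (fun _ => isOpen_ball) fun x hx => ?_
  obtain ⟨c, rfl⟩ := hΩ.exists_chart hx
  exact mem_iUnion.2 ⟨c, mem_ball_self c.radius_pos⟩

namespace LipschitzChart

lemma add_smul_dir_mem (c : LipschitzChart Ω) {x : V} {t : ℝ} (hx : x ∈ closure Ω) (ht : 0 < t)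
    (hxc : x ∈ ball c.center (2 * c.radius))
    (hxtc : x + t • c.dir ∈ ball c.center (2 * c.radius)) : x + t • c.dir ∈ Ω := by
  have hnonneg : 0 ≤ c.height x := by
    rw [closure_eq_self_union_frontier] at hx
    exact hx.elim (fun h => ((c.mem_iff x hxc).1 h).le)
      fun h => ((c.mem_frontier_iff x hxc).1 h).ge
  rw [c.mem_iff _ hxtc, c.height_add_smul_dir]
  positivity

variable {T : Finset (LipschitzChart Ω)} {w : LipschitzChart Ω → ℝ} {x : V} {ρ : ℝ}

lemma add_sum_smul_dir_mem_closedBall (hw : ∀ c, 0 ≤ w c) (hρ : ∑ c ∈ T, w c ≤ ρ) :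
    x + ∑ c ∈ T, w c • c.dir ∈ closedBall x ρ := by
  rw [mem_closedBall_iff_norm, add_sub_cancel_left]
  exact (norm_sum_le_of_le T fun c _ => by
    rw [norm_smul, c.norm_dir, mul_one, Real.norm_of_nonneg (hw c)]).trans hρ

lemma add_sum_smul_dir_mem_of_mem_closure [DecidableEq (LipschitzChart Ω)] {c : LipschitzChart Ω}
    (hc : c ∉ T) (hw : ∀ c, 0 ≤ w c) (hρ : ∑ c ∈ insert c T, w c ≤ ρ)
    (hx : x + ∑ c ∈ T, w c • c.dir ∈ closure Ω) (hwc : w c ≠ 0)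
    (hball : closedBall x ρ ⊆ ball c.center (2 * c.radius)) :
    x + ∑ c ∈ insert c T, w c • c.dir ∈ Ω := by
  have hin := add_sum_smul_dir_mem_closedBall (x := x) hw hρ
  have hρT : ∑ c ∈ T, w c ≤ ρ := by
    rw [Finset.sum_insert hc] at hρ
    linarith [hw c]
  rw [Finset.sum_insert hc, add_comm (w c • c.dir), ← add_assoc] at hin ⊢
  exact c.add_smul_dir_mem hx ((hw c).lt_of_ne' hwc)
    (hball (add_sum_smul_dir_mem_closedBall hw hρT)) (hball hin)

lemma add_sum_smul_dir_mem_closure (hx : x ∈ closure Ω) (hw : ∀ c, 0 ≤ w c)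
    (hρ : ∑ c ∈ T, w c ≤ ρ)
    (hball : ∀ c ∈ T, w c ≠ 0 → closedBall x ρ ⊆ ball c.center (2 * c.radius)) :
    x + ∑ c ∈ T, w c • c.dir ∈ closure Ω := by
  classical
  induction T using Finset.induction_on with
  | empty => simpa using hx
  | insert c T hc ih =>
    have hT := ih ((Finset.sum_le_sum_of_subset_of_nonneg (Finset.subset_insert c T)
      fun c _ _ => hw c).trans hρ) fun d hd => hball d (Finset.mem_insert_of_mem hd)
    by_cases hwc : w c = 0
    · simpa [Finset.sum_insert hc, hwc] using hT
    · exact subset_closure <| add_sum_smul_dir_mem_of_mem_closure hc hw hρ hT hwc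
        (hball c (Finset.mem_insert_self c T) hwc)

lemma add_sum_smul_dir_mem (hx : x ∈ closure Ω) (hw : ∀ c, 0 ≤ w c) (hρ : ∑ c ∈ T, w c ≤ ρ)
    (hball : ∀ c ∈ T, w c ≠ 0 → closedBall x ρ ⊆ ball c.center (2 * c.radius))
    (hpos : x ∈ Ω ∨ ∃ c ∈ T, w c ≠ 0) : x + ∑ c ∈ T, w c • c.dir ∈ Ω := by
  classical
  by_cases h : ∃ c ∈ T, w c ≠ 0
  · obtain ⟨c, hc, hwc⟩ := h
    have herase : ∑ c ∈ T.erase c, w c ≤ ρ :=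
      (Finset.sum_le_sum_of_subset_of_nonneg (Finset.erase_subset c T) fun c _ _ => hw c).trans hρ
    rw [← Finset.insert_erase hc] at hρ ⊢
    exact add_sum_smul_dir_mem_of_mem_closure (Finset.notMem_erase c T) hw hρ
      (add_sum_smul_dir_mem_closure hx hw herase fun d hd => hball d (Finset.mem_of_mem_erase hd))
      hwc (hball c hc hwc)
  · rw [Finset.sum_eq_zero fun c hc => by rw [not_not.1 fun hwc => h ⟨c, hc, hwc⟩, zero_smul],
      add_zero]
    exact hpos.resolve_right h

/-- A smooth cutoff equal to `1` on the ball of radius `radius` and supported where the chart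
is valid. -/
noncomputable def bump (c : LipschitzChart Ω) : ContDiffBump c.center where
  rIn := c.radius
  rOut := 3 / 2 * c.radius
  rIn_pos := c.radius_pos
  rIn_lt_rOut := by linarith [c.radius_pos]

/-- The directions of the charts in `T`, patched together by their cutoffs. A short displacement
along this field moves `closure Ω` into `Ω` when the charts cover the boundary. -/
noncomputable def inwardField [HasContDiffBump V] (T : Finset (LipschitzChart Ω)) (x : V) : V :=
  ∑ c ∈ T, c.bump x • c.dir

variable [HasContDiffBump V]

lemma hasCompactSupport_inwardField [FiniteDimensional ℝ V] (T : Finset (LipschitzChart Ω)) :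
    HasCompactSupport (inwardField T) := by
  classical
  rw [show inwardField T = ∑ c ∈ T, fun x => c.bump x • c.dir from
    (Finset.sum_fn _ _).symm]
  refine Finset.sum_induction _ _ (fun _ _ => HasCompactSupport.add) HasCompactSupport.zero ?_
  exact fun c _ => c.bump.hasCompactSupport.smul_right

lemma contDiff_inwardField (T : Finset (LipschitzChart Ω)) {m : ℕ∞} :
    ContDiff ℝ m (inwardField T) :=
  ContDiff.sum fun c _ => c.bump.contDiff.smul contDiff_const

lemma eventually_mapsTo_add_smul_inwardField (hT : frontier Ω ⊆ ⋃ c ∈ T, ball c.center c.radius) :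
    ∀ᶠ ε in 𝓝[>] (0 : ℝ), MapsTo (fun x => x + ε • inwardField T x) (closure Ω) Ω := by
  have hsmall : ∀ᶠ ε in 𝓝[>] (0 : ℝ), ∀ c ∈ T, T.card * ε < c.radius / 2 := by
    refine nhdsWithin_le_nhds ((Finset.eventually_all T).2 fun c _ => ?_)
    exact (continuous_const.mul continuous_id).tendsto' _ _ (by simp)
      |>.eventually_lt_const (half_pos c.radius_pos)
  filter_upwards [hsmall, self_mem_nhdsWithin] with ε hε hε0 x hx
  have hε0 : 0 < ε := hε0
  simp only [inwardField, Finset.smul_sum, smul_smul]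
  refine add_sum_smul_dir_mem (ρ := T.card * ε) hx
    (fun c => mul_nonneg hε0.le c.bump.nonneg) ?_ ?_ ?_
  · rw [← nsmul_eq_mul]
    exact Finset.sum_le_card_nsmul _ _ _ fun c _ => mul_le_of_le_one_right hε0.le c.bump.le_one
  · intro c hc hwc y hy
    have hxc : x ∈ ball c.center (3 / 2 * c.radius) :=
      c.bump.support_eq.subset (right_ne_zero_of_mul hwc)
    rw [mem_ball] at hxc ⊢
    linarith [dist_triangle y x c.center, mem_closedBall.1 hy, hε c hc]
  · rw [closure_eq_self_union_frontier] at hx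
    refine hx.imp_right fun hx => ?_
    obtain ⟨c, hc, hxc⟩ := mem_iUnion₂.1 (hT hx)
    refine ⟨c, hc, mul_ne_zero hε0.ne' ?_⟩
    simp [c.bump.one_of_mem_closedBall (ball_subset_closedBall hxc)]

end LipschitzChart

end LipschitzCharts

section RieszIntegrability

variable {V : Type*} [NormedAddCommGroup V] [NormedSpace ℝ V] [FiniteDimensional ℝ V]
  [MeasurableSpace V] [BorelSpace V] (μ : Measure V) [μ.IsAddHaarMeasure]

lemma integrable_min_norm_one_mul_norm_rpow [Nontrivial V] {s : ℝ} (hs : s ∈ Ioo (0 : ℝ) 1) :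
    Integrable (fun h : V => min ‖h‖ 1 * ‖h‖ ^ (-(Module.finrank ℝ V + s))) μ := by
  refine (integrable_fun_norm_addHaar μ
    (f := fun r => min r 1 * r ^ (-(Module.finrank ℝ V + s)))).2 ?_
  have hpow {r : ℝ} (hr : 0 < r) :
      r ^ (Module.finrank ℝ V - 1) * r ^ (-(Module.finrank ℝ V + s)) = r ^ (-1 - s) := by
    rw [← Real.rpow_natCast, ← Real.rpow_add hr, Nat.cast_pred Module.finrank_pos]
    ring_nf
  rw [← Ioc_union_Ioi_eq_Ioi zero_le_one]
  refine IntegrableOn.union ?_ ?_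
  · have hnear : IntegrableOn (fun r : ℝ => r ^ (-s)) (Ioc 0 1) :=
      (intervalIntegrable_iff_integrableOn_Ioc_of_le zero_le_one).1
        (intervalIntegral.intervalIntegrable_rpow' (by linarith [hs.2]))
    refine hnear.congr_fun (fun r hr => ?_) measurableSet_Ioc
    simp only [smul_eq_mul]
    rw [min_eq_left hr.2, mul_left_comm, hpow hr.1, mul_comm, ← Real.rpow_add_one hr.1.ne']
    ring_nf
  · have hfar : IntegrableOn (fun r : ℝ => r ^ (-1 - s)) (Ioi 1) :=
      integrableOn_Ioi_rpow_of_lt (by linarith [hs.1]) one_pos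
    refine hfar.congr_fun (fun r hr => ?_) measurableSet_Ioi
    simp only [smul_eq_mul]
    rw [min_eq_right (mem_Ioi.1 hr).le, one_mul, hpow (one_pos.trans hr)]

lemma lintegral_rieszMeasure (α : ℝ) {G : V × V → ℝ≥0∞} (hG : Measurable G) :
    ∫⁻ p, G p ∂rieszMeasure μ α =
      ∫⁻ h, ENNReal.ofReal (‖h‖ ^ (-α)) * ∫⁻ x, G (x, x + h) ∂μ ∂μ := by
  rw [rieszMeasure, lintegral_withDensity_eq_lintegral_mul _ (measurable_ofReal_dist_rpow α) hG,
    ← (measurePreserving_prod_add μ μ).lintegral_comp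
      ((measurable_ofReal_dist_rpow α).mul hG), lintegral_prod_symm' _ (by fun_prop)]
  refine lintegral_congr fun h => ?_
  simp only [Pi.mul_apply, dist_self_add_right]
  exact lintegral_const_mul _ (by fun_prop)

lemma lintegral_rieszMeasure_ne_top [Nontrivial V] {s : ℝ} (hs : s ∈ Ioo (0 : ℝ) 1)
    {G : V × V → ℝ≥0∞} (hG : Measurable G) {C : ℝ≥0∞} (hC : C ≠ ∞)
    (h : ∀ h, ∫⁻ x, G (x, x + h) ∂μ ≤ C * ENNReal.ofReal (min ‖h‖ 1)) :
    ∫⁻ p, G p ∂rieszMeasure μ (Module.finrank ℝ V + s) ≠ ∞ := by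
  have hfin := (integrable_min_norm_one_mul_norm_rpow μ hs).lintegral_lt_top
  refine ne_top_of_le_ne_top (ENNReal.mul_ne_top hC hfin.ne) ?_
  rw [lintegral_rieszMeasure μ _ hG, ← lintegral_const_mul' _ _ hC]
  refine lintegral_mono fun v => (mul_le_mul_right (h v) _).trans_eq ?_
  rw [ENNReal.ofReal_mul (by positivity)]
  ring

lemma setLIntegral_dist_rieszMeasure_ne_top [Nontrivial V] {s : ℝ} (hs : s ∈ Ioo (0 : ℝ) 1)
    {Ω : Set V} (hΩ : MeasurableSet Ω) (hΩb : IsBounded Ω) :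
    ∫⁻ p in Ω ×ˢ Ω, ENNReal.ofReal (dist p.1 p.2)
      ∂rieszMeasure μ (Module.finrank ℝ V + s) ≠ ∞ := by
  obtain ⟨D, hD⟩ := Metric.isBounded_iff.1 hΩb
  rw [← lintegral_indicator (hΩ.prod hΩ)]
  refine lintegral_rieszMeasure_ne_top μ hs (by measurability)
    (C := ENNReal.ofReal (max D 1) * μ Ω)
    (ENNReal.mul_ne_top ENNReal.ofReal_ne_top hΩb.measure_lt_top.ne) fun h => ?_
  calc ∫⁻ x, (Ω ×ˢ Ω).indicator (fun p => ENNReal.ofReal (dist p.1 p.2)) (x, x + h) ∂μ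
      ≤ ∫⁻ x, Ω.indicator (fun _ => ENNReal.ofReal (max D 1 * min ‖h‖ 1)) x ∂μ := by
        refine lintegral_mono fun x => indicator_apply_le' (fun hx => ?_) fun _ => zero_le
        rw [indicator_of_mem hx.1, dist_self_add_right]
        refine ENNReal.ofReal_le_ofReal ?_
        have hhD : ‖h‖ ≤ D := by simpa using hD hx.1 hx.2
        rcases le_total ‖h‖ 1 with h1 | h1
        · rw [min_eq_left h1]
          exact le_mul_of_one_le_left (norm_nonneg h) (le_max_right D 1)
        · rw [min_eq_right h1, mul_one]
          exact hhD.trans (le_max_left D 1)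
    _ = ENNReal.ofReal (max D 1) * μ Ω * ENNReal.ofReal (min ‖h‖ 1) := by
        rw [lintegral_indicator_const hΩ, ENNReal.ofReal_mul (by positivity)]
        ring

end RieszIntegrability

section BoundaryLayer

variable {V : Type*} [NormedAddCommGroup V] [NormedSpace ℝ V] {Ω : Set V}

lemma exists_mem_segment_frontier {x y : V} (hx : x ∈ Ω) (hy : y ∉ Ω) :
    ∃ z ∈ segment ℝ x y, z ∈ frontier Ω := by
  have hf : Continuous fun t : unitInterval => AffineMap.lineMap (k := ℝ) x y (t : ℝ) := by
    fun_prop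
  obtain ⟨t, ht⟩ := nonempty_frontier_iff.2
    (⟨⟨0, by simpa using hx⟩, (ne_univ_iff_exists_notMem _).2 ⟨1, by simpa using hy⟩⟩ :
      ((fun t : unitInterval => AffineMap.lineMap (k := ℝ) x y (t : ℝ)) ⁻¹' Ω).Nonempty ∧ _)
  refine ⟨_, ?_, hf.frontier_preimage_subset Ω ht⟩
  rw [segment_eq_image_lineMap]
  exact mem_image_of_mem _ t.2

lemma measure_eq_lintegral_volume_sub_smul_mem [MeasurableSpace V] [BorelSpace V]
    [SecondCountableTopology V] (μ : Measure V) [SFinite μ] [μ.IsAddRightInvariant] (e : V)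
    {S : Set V} (hS : MeasurableSet S) :
    μ S = ∫⁻ y, volume {t ∈ Icc (0 : ℝ) 1 | y - t • e ∈ S} ∂μ := by
  set W := {p : ℝ × V | p.1 ∈ Icc (0 : ℝ) 1 ∧ p.2 - p.1 • e ∈ S} with hWdef
  have hW : MeasurableSet W :=
    (measurable_fst measurableSet_Icc).inter
      ((show Measurable fun p : ℝ × V => p.2 - p.1 • e by fun_prop) hS)
  have hslice (t : ℝ) : μ (Prod.mk t ⁻¹' W) = (Icc (0 : ℝ) 1).indicator (fun _ => μ S) t := by
    by_cases ht : t ∈ Icc (0 : ℝ) 1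
    · have : Prod.mk t ⁻¹' W = (· + -(t • e)) ⁻¹' S := by
        ext y
        simp only [hWdef, mem_preimage, mem_ofPred_eq, ht, true_and, sub_eq_add_neg]
      rw [this, measure_preimage_add_right, indicator_of_mem ht]
    · have : Prod.mk t ⁻¹' W = ∅ := eq_empty_of_forall_notMem fun y hy => ht hy.1
      rw [this, measure_empty, indicator_of_notMem ht]
  calc μ S = ∫⁻ t, (Icc (0 : ℝ) 1).indicator (fun _ => μ S) t := by
        rw [lintegral_indicator_const measurableSet_Icc]; simp
    _ = _ := by
        simp_rw [← hslice]
        rw [← Measure.prod_apply hW, Measure.prod_apply_symm hW]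
        rfl

namespace LipschitzChart

variable {T : Finset (LipschitzChart Ω)}

lemma setOf_add_notMem_subset (hT : frontier Ω ⊆ ⋃ c ∈ T, ball c.center c.radius) {h : V}
    (hh : ∀ c ∈ T, ‖h‖ < c.radius) :
    {x ∈ Ω | x + h ∉ Ω} ⊆ ⋃ c ∈ T, {y ∈ ball c.center (2 * c.radius) |
      |c.height y| ≤ c.lipschitzConst * ‖h‖} := by
  rintro x ⟨hx, hxh⟩
  obtain ⟨p, hp, hpfr⟩ := exists_mem_segment_frontier hx hxh
  obtain ⟨c, hc, hpc⟩ := mem_iUnion₂.1 (hT hpfr)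
  have hxp : dist x p ≤ ‖h‖ := by
    simpa [dist_comm] using segment_subset_closedBall_left x (x + h) hp
  refine mem_iUnion₂.2 ⟨c, hc, ?_, ?_⟩
  · rw [mem_ball] at hpc ⊢
    linarith [dist_triangle x p c.center, hh c hc]
  · have hheight : c.height p = 0 :=
      (c.mem_frontier_iff p (ball_subset_ball (by linarith [c.radius_pos]) hpc)).1 hpfr
    calc |c.height x| = dist (c.height x) (c.height p) := by rw [hheight, Real.dist_0_eq_abs]
      _ ≤ c.lipschitzConst * dist x p := c.lipschitzWith_height.dist_le_mul x p
      _ ≤ c.lipschitzConst * ‖h‖ := by gcongr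

variable [MeasurableSpace V] [BorelSpace V] [SecondCountableTopology V] (μ : Measure V)

lemma measure_abs_height_le [SFinite μ] [μ.IsAddRightInvariant] (c : LipschitzChart Ω) (x : V)
    (R ρ : ℝ) :
    μ {y ∈ ball x R | |c.height y| ≤ ρ} ≤ ENNReal.ofReal (2 * ρ) * μ (ball x (R + 1)) := by
  have hmeas : MeasurableSet {y ∈ ball x R | |c.height y| ≤ ρ} :=
    measurableSet_ball.inter
      (isClosed_le c.lipschitzWith_height.continuous.abs continuous_const).measurableSet
  rw [measure_eq_lintegral_volume_sub_smul_mem μ c.dir hmeas,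
    ← lintegral_indicator_const measurableSet_ball]
  refine lintegral_mono fun y => ?_
  by_cases hy : y ∈ ball x (R + 1)
  · rw [indicator_of_mem hy]
    refine (measure_mono (t := Icc (c.height y - ρ) (c.height y + ρ)) fun t ht => ?_).trans_eq ?_
    · have habs := abs_le.1 ht.2.2
      have hheight := c.height_add_smul_dir (y - t • c.dir) t
      rw [sub_add_cancel] at hheight
      constructor <;> linarith
    · rw [Real.volume_Icc]
      ring_nf
  · rw [indicator_of_notMem hy, nonpos_iff_eq_zero]
    convert measure_empty (μ := (volume : Measure ℝ))
    refine eq_empty_of_forall_notMem fun t ht => hy ?_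
    have hdist : dist y (y - t • c.dir) ≤ 1 := by
      rw [dist_self_sub_right, norm_smul, c.norm_dir, mul_one, Real.norm_of_nonneg ht.1.1]
      exact ht.1.2
    rw [mem_ball]
    linarith [dist_triangle y (y - t • c.dir) x, mem_ball.1 ht.2.1]

variable [FiniteDimensional ℝ V] [μ.IsAddHaarMeasure]

lemma exists_forall_measure_add_notMem_le (hΩb : IsBounded Ω)
    (hT : frontier Ω ⊆ ⋃ c ∈ T, ball c.center c.radius) :
    ∃ C ≠ ∞, ∀ h : V, μ {x ∈ Ω | x + h ∉ Ω} ≤ C * ENNReal.ofReal (min ‖h‖ 1) := by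
  obtain ⟨ρ, hρ0, hρ⟩ : ∃ ρ > 0, ∀ c ∈ T, ρ < c.radius := by
    have hsmall : ∀ᶠ ρ in 𝓝[>] (0 : ℝ), ∀ c ∈ T, ρ < c.radius :=
      (Finset.eventually_all T).2 fun c _ =>
        nhdsWithin_le_nhds (eventually_lt_nhds c.radius_pos)
    exact (hsmall.and self_mem_nhdsWithin).exists.imp fun ρ h => h.symm
  set C := ∑ c ∈ T, ENNReal.ofReal (2 * c.lipschitzConst) *
    μ (ball c.center (2 * c.radius + 1))
  have hC : C ≠ ∞ := ENNReal.sum_ne_top.2 fun c _ =>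
    ENNReal.mul_ne_top ENNReal.ofReal_ne_top measure_ball_lt_top.ne
  have hρ' : ENNReal.ofReal (min ρ 1) ≠ 0 := by simp [hρ0]
  refine ⟨max C (μ Ω / ENNReal.ofReal (min ρ 1)),
    (max_lt hC.lt_top (ENNReal.div_lt_top hΩb.measure_lt_top.ne hρ')).ne, fun h => ?_⟩
  rcases le_or_gt (min ρ 1) ‖h‖ with hh | hh
  · calc μ {x ∈ Ω | x + h ∉ Ω}
        ≤ μ Ω / ENNReal.ofReal (min ρ 1) * ENNReal.ofReal (min ρ 1) := by
          rw [ENNReal.div_mul_cancel hρ' ENNReal.ofReal_ne_top]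
          exact measure_mono (sep_subset _ _)
      _ ≤ _ :=
          mul_le_mul' (le_max_right _ _)
            (ENNReal.ofReal_le_ofReal (le_min hh (min_le_right _ _)))
  · calc μ {x ∈ Ω | x + h ∉ Ω}
        ≤ ∑ c ∈ T, μ {y ∈ ball c.center (2 * c.radius) |
            |c.height y| ≤ c.lipschitzConst * ‖h‖} :=
          (measure_mono <| setOf_add_notMem_subset hT fun c hc =>
            (hh.trans_le (min_le_left _ _)).trans (hρ c hc)).trans
              (measure_biUnion_finset_le T _)
      _ ≤ ∑ c ∈ T, ENNReal.ofReal (2 * c.lipschitzConst) *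
            μ (ball c.center (2 * c.radius + 1)) * ENNReal.ofReal ‖h‖ := by
          refine Finset.sum_le_sum fun c _ => (c.measure_abs_height_le μ _ _ _).trans_eq ?_
          rw [← mul_assoc, ENNReal.ofReal_mul (by positivity), mul_right_comm]
      _ = C * ENNReal.ofReal (min ‖h‖ 1) := by
          rw [← Finset.sum_mul, min_eq_left (hh.le.trans (min_le_right _ _))]
      _ ≤ _ := by gcongr; exact le_max_left _ _

variable {s : ℝ} [Nontrivial V]

lemma rieszMeasure_prod_compl_ne_top (hs : s ∈ Ioo (0 : ℝ) 1) (hΩ : MeasurableSet Ω)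
    (hΩb : IsBounded Ω) (hT : frontier Ω ⊆ ⋃ c ∈ T, ball c.center c.radius) :
    rieszMeasure μ (Module.finrank ℝ V + s) (Ω ×ˢ Ωᶜ) ≠ ∞ := by
  obtain ⟨C, hC, hle⟩ := exists_forall_measure_add_notMem_le μ hΩb hT
  have hS := hΩ.prod hΩ.compl
  rw [← lintegral_indicator_one hS]
  refine lintegral_rieszMeasure_ne_top μ hs (measurable_one.indicator hS) hC fun h => ?_
  refine Eq.trans_le ?_ (hle h)
  have hmeas : MeasurableSet {x ∈ Ω | x + h ∉ Ω} := hΩ.inter (measurable_add_const h hΩ.compl)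
  exact (lintegral_indicator_one hmeas).symm ▸ lintegral_congr fun x => rfl

lemma rieszMeasure_cross_ne_top (hs : s ∈ Ioo (0 : ℝ) 1) (hΩ : MeasurableSet Ω)
    (hΩb : IsBounded Ω) (hT : frontier Ω ⊆ ⋃ c ∈ T, ball c.center c.radius) :
    rieszMeasure μ (Module.finrank ℝ V + s) (Ω ×ˢ Ωᶜ ∪ Ωᶜ ×ˢ Ω) ≠ ∞ := by
  have h := rieszMeasure_prod_compl_ne_top μ hs hΩ hΩb hT
  refine measure_union_ne_top h ?_
  rwa [← preimage_swap_prod, rieszMeasure_preimage_swap _ (hΩ.prod hΩ.compl)]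

end LipschitzChart

end BoundaryLayer

section Distortion

variable {X : Type*} [MeasurableSpace X] [MetricSpace X] {μ : Measure X} {c : ℝ≥0} {Φ : X → X}

/-- The map `Φ` is injective and expands distances, and contracts volumes, by a factor of at most
`c`. These are the maps under which interaction energies grow by a controlled factor. -/
structure DistortionLE (μ : Measure X) (c : ℝ≥0) (Φ : X → X) : Prop where
  injective : Function.Injective Φ
  lipschitzWith : LipschitzWith c Φ
  measure_preimage_le : ∀ B, μ (Φ ⁻¹' B) ≤ c * μ B

namespace DistortionLE

lemma map_le [BorelSpace X] (h : DistortionLE μ c Φ) :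
    μ.map Φ ≤ c • μ :=
  Measure.le_iff.2 fun B hB => by
    rw [Measure.map_apply h.lipschitzWith.continuous.measurable hB]
    exact h.measure_preimage_le B

lemma dist_rpow_le (h : DistortionLE μ c Φ) {α : ℝ} (hα : 0 < α) (x y : X) :
    dist x y ^ (-α) ≤ (c : ℝ) ^ α * dist (Φ x) (Φ y) ^ (-α) := by
  rcases eq_or_ne x y with rfl | hxy
  · rw [dist_self, dist_self, Real.zero_rpow (neg_ne_zero.2 hα.ne'), mul_zero]
  · have hΦ : 0 < dist (Φ x) (Φ y) := dist_pos.2 (h.injective.ne hxy)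
    have hx : 0 < dist x y := dist_pos.2 hxy
    rw [Real.rpow_neg hx.le, Real.rpow_neg hΦ.le, ← div_eq_mul_inv,
      inv_le_comm₀ (by positivity) (div_pos (Real.rpow_pos_of_pos ?_ α) (by positivity)),
      inv_div, div_le_iff₀ (Real.rpow_pos_of_pos ?_ α), mul_comm,
      ← Real.mul_rpow c.coe_nonneg hx.le]
    · exact Real.rpow_le_rpow hΦ.le (h.lipschitzWith.dist_le_mul x y) hα.le
    all_goals exact pos_of_mul_pos_left (hΦ.trans_le (h.lipschitzWith.dist_le_mul x y)) hx.le

variable [BorelSpace X] [SFinite μ]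

lemma map_prod_le (h : DistortionLE μ c Φ) :
    (μ.prod μ).map (Prod.map Φ Φ) ≤ (c ^ 2) • μ.prod μ := by
  have hΦ : Measurable Φ := h.lipschitzWith.continuous.measurable
  rw [← Measure.map_prod_map μ μ hΦ hΦ]
  exact (Measure.prod_mono h.map_le h.map_le).trans_eq <| by
    rw [Measure.prod_smul_left, Measure.prod_smul_right, smul_smul, sq]

variable [SecondCountableTopology X]

lemma rieszMeasure_preimage_le (h : DistortionLE μ c Φ) {α : ℝ} (hα : 0 < α) {S : Set (X × X)}
    (hS : MeasurableSet S) :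
    rieszMeasure μ α (Prod.map Φ Φ ⁻¹' S) ≤ (c ^ α * c ^ 2 : ℝ≥0) * rieszMeasure μ α S := by
  have hΦ : Measurable (Prod.map Φ Φ) :=
    h.lipschitzWith.continuous.measurable.prodMap h.lipschitzWith.continuous.measurable
  calc rieszMeasure μ α (Prod.map Φ Φ ⁻¹' S)
      ≤ ∫⁻ p in Prod.map Φ Φ ⁻¹' S,
          (c ^ α : ℝ≥0) * ENNReal.ofReal (dist (Φ p.1) (Φ p.2) ^ (-α)) ∂μ.prod μ := by
        rw [rieszMeasure, withDensity_apply']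
        refine lintegral_mono fun p => ?_
        rw [← ENNReal.ofReal_coe_nnreal, ← ENNReal.ofReal_mul (NNReal.coe_nonneg _),
          NNReal.coe_rpow]
        exact ENNReal.ofReal_le_ofReal (h.dist_rpow_le hα _ _)
    _ = (c ^ α : ℝ≥0) *
          ∫⁻ p in S, ENNReal.ofReal (dist p.1 p.2 ^ (-α)) ∂(μ.prod μ).map (Prod.map Φ Φ) := by
        rw [lintegral_const_mul' _ _ ENNReal.coe_ne_top,
          setLIntegral_map hS (measurable_ofReal_dist_rpow α) hΦ]
        rfl
    _ ≤ (c ^ α : ℝ≥0) *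
          ((c ^ 2 : ℝ≥0) * ∫⁻ p in S, ENNReal.ofReal (dist p.1 p.2 ^ (-α)) ∂μ.prod μ) := by
        gcongr
        rw [← smul_eq_mul, ← lintegral_smul_measure, ← Measure.restrict_smul]
        exact lintegral_mono' (Measure.restrict_mono le_rfl h.map_prod_le) le_rfl
    _ = (c ^ α * c ^ 2 : ℝ≥0) * rieszMeasure μ α S := by
        rw [rieszMeasure, withDensity_apply', ← mul_assoc, ← ENNReal.coe_mul]

lemma restrict_rieszMeasure_prod_compl_le (h : DistortionLE μ c Φ) {α : ℝ} (hα : 0 < α)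
    {E Ω : Set X} (hE : MeasurableSet E) (hΩ : MeasurableSet Ω) (hΦ : MapsTo Φ Ω Ω) :
    (rieszMeasure μ α).restrict (Ω ×ˢ Ω) ((Φ ⁻¹' E) ×ˢ (Φ ⁻¹' E)ᶜ) ≤
      (c ^ α * c ^ 2 : ℝ≥0) * (rieszMeasure μ α).restrict (Ω ×ˢ Ω) (E ×ˢ Eᶜ) := by
  rw [Measure.restrict_apply' (hΩ.prod hΩ), Measure.restrict_apply' (hΩ.prod hΩ)]
  refine (measure_mono ?_).trans
    (h.rieszMeasure_preimage_le hα ((hE.prod hE.compl).inter (hΩ.prod hΩ)))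
  exact fun p hp => ⟨hp.1, hΦ hp.2.1, hΦ hp.2.2⟩

end DistortionLE

end Distortion

section Deformation

variable {V : Type*} [NormedAddCommGroup V] [NormedSpace ℝ V] {W : V → V}

section Haar

variable [FiniteDimensional ℝ V] [MeasurableSpace V] [BorelSpace V]

lemma eventually_distortionLE (μ : Measure V) [μ.IsAddHaarMeasure] {c : ℝ≥0} (hc : 1 < c) :
    ∀ᶠ η in 𝓝[>] (0 : ℝ≥0), ∀ Φ : V → V,
      ApproximatesLinearOn Φ (ContinuousLinearMap.id ℝ V) univ η → DistortionLE μ c Φ := by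
  have hdet : (c⁻¹ : ℝ≥0) < ENNReal.ofReal |(ContinuousLinearMap.id ℝ V).det| := by
    rw [show (ContinuousLinearMap.id ℝ V).det = 1 from LinearMap.det_id, abs_one,
      ENNReal.ofReal_one]
    exact_mod_cast inv_lt_one_of_one_lt₀ hc
  filter_upwards [mul_le_addHaar_image_of_lt_det μ _ hdet,
    Ioo_mem_nhdsGT (lt_min one_pos (tsub_pos_of_lt hc))] with η hvol ⟨_, hη⟩ Φ hΦ
  have hη1 : (η : ℝ) < 1 := mod_cast hη.trans_le (min_le_left _ _)
  have hη2 : (η : ℝ) + 1 ≤ c := mod_cast (lt_tsub_iff_right.1 (hη.trans_le (min_le_right _ _))).le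
  have happ (x y : V) : ‖Φ x - Φ y - (x - y)‖ ≤ η * ‖x - y‖ := hΦ x (mem_univ x) y (mem_univ y)
  refine ⟨fun x y hxy => ?_, LipschitzWith.of_dist_le_mul fun x y => ?_, fun B => ?_⟩
  · have hle : ‖x - y‖ ≤ η * ‖x - y‖ := by simpa [hxy, norm_sub_rev] using happ x y
    have := norm_nonneg (x - y)
    exact sub_eq_zero.1 (norm_le_zero_iff.1 (by nlinarith))
  · rw [dist_eq_norm, dist_eq_norm]
    calc ‖Φ x - Φ y‖ ≤ ‖Φ x - Φ y - (x - y)‖ + ‖x - y‖ := norm_le_norm_sub_add _ _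
      _ ≤ (η + 1) * ‖x - y‖ := by linarith [happ x y]
      _ ≤ c * ‖x - y‖ := by gcongr
  · have hle := (hvol _ _ (hΦ.mono_set (subset_univ (Φ ⁻¹' B)))).trans
      (measure_mono (image_preimage_subset Φ B))
    rwa [ENNReal.coe_inv (one_pos.trans hc).ne', ← ENNReal.div_eq_inv_mul,
      ENNReal.div_le_iff' (mod_cast (one_pos.trans hc).ne') ENNReal.coe_ne_top] at hle

lemma eventually_distortionLE_add_smul_sub (μ : Measure V) [μ.IsAddHaarMeasure] {c : ℝ≥0}
    (hc : 1 < c) {K : ℝ≥0} (hW : LipschitzWith K W) :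
    ∀ᶠ ε in 𝓝[>] (0 : ℝ), ∀ t, DistortionLE μ c fun x => x + ε • W x - t := by
  obtain ⟨η, hη, hη0 : 0 < η⟩ :=
    ((eventually_distortionLE μ hc).and self_mem_nhdsWithin).exists
  have hsmall : ∀ᶠ ε : ℝ in 𝓝[>] 0, ε * K < η := nhdsWithin_le_nhds (
    ((continuous_mul_const (K : ℝ)).tendsto' 0 0 (zero_mul _)).eventually_lt_const
      (NNReal.coe_pos.2 hη0))
  filter_upwards [hsmall, self_mem_nhdsWithin] with ε hε hε0 t
  refine hη _ fun x _ y _ => ?_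
  calc ‖x + ε • W x - t - (y + ε • W y - t) - (x - y)‖ = ‖ε • (W x - W y)‖ := by
        rw [smul_sub]; congr 1; abel
    _ = ε * ‖W x - W y‖ := by rw [norm_smul, Real.norm_of_nonneg (le_of_lt hε0)]
    _ ≤ ε * (K * ‖x - y‖) := by
        gcongr
        · exact le_of_lt hε0
        · simpa only [dist_eq_norm] using hW.dist_le_mul x y
    _ ≤ η * ‖x - y‖ := by rw [← mul_assoc]; gcongr

end Haar

lemma eventually_dist_add_smul_sub_le {C ρ : ℝ} (hW : ∀ x, ‖W x‖ ≤ C) (hρ : 0 < ρ) :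
    ∀ᶠ ε in 𝓝[>] (0 : ℝ), ∀ᶠ t in 𝓝 (0 : V), ∀ x, dist (x + ε • W x - t) x ≤ ρ := by
  have hsmall : ∀ᶠ ε in 𝓝[>] (0 : ℝ), ε * C < ρ / 2 := nhdsWithin_le_nhds <|
    ((continuous_mul_const C).tendsto' 0 0 (zero_mul _)).eventually_lt_const (half_pos hρ)
  filter_upwards [hsmall, self_mem_nhdsWithin] with ε hε hε0
  filter_upwards [ball_mem_nhds (0 : V) (half_pos hρ)] with t ht x
  calc dist (x + ε • W x - t) x = ‖ε • W x - t‖ := by rw [dist_eq_norm]; congr 1; abel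
    _ ≤ ‖ε • W x‖ + ‖t‖ := norm_sub_le _ _
    _ = ε * ‖W x‖ + ‖t‖ := by rw [norm_smul, Real.norm_of_nonneg (le_of_lt hε0)]
    _ ≤ ε * C + ρ / 2 := by
        gcongr
        exacts [le_of_lt hε0, hW x, (mem_ball_zero_iff.1 ht).le]
    _ ≤ ρ := by linarith

lemma eventually_mapsTo_sub [FiniteDimensional ℝ V] {Ω : Set V} (hΩ : IsOpen Ω)
    (hΩb : IsBounded Ω) {Ψ : V → V} (hΨ : Continuous Ψ) (hmaps : MapsTo Ψ (closure Ω) Ω) :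
    ∀ᶠ t in 𝓝 (0 : V), MapsTo (fun x => Ψ x - t) Ω Ω := by
  obtain ⟨δ, hδ, hδΩ⟩ := (hΩb.isCompact_closure.image hΨ).exists_thickening_subset_open hΩ
    hmaps.image_subset
  filter_upwards [ball_mem_nhds (0 : V) hδ] with t ht x hx
  exact hδΩ <| mem_thickening_iff.2
    ⟨Ψ x, mem_image_of_mem Ψ (subset_closure hx), by simpa using ht⟩

end Deformation

theorem LipschitzChart.exists_deformation {V : Type*} [NormedAddCommGroup V] [NormedSpace ℝ V]
    [HasContDiffBump V] [FiniteDimensional ℝ V] [MeasurableSpace V] [BorelSpace V]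
    (μ : Measure V) [μ.IsAddHaarMeasure] {Ω : Set V} (hΩ : IsOpen Ω) (hΩb : IsBounded Ω)
    {T : Finset (LipschitzChart Ω)} (hT : frontier Ω ⊆ ⋃ c ∈ T, ball c.center c.radius)
    {c : ℝ≥0} (hc : 1 < c) {ρ : ℝ} (hρ : 0 < ρ) :
    ∃ Ψ : V → V, ContDiff ℝ (⊤ : ℕ∞) Ψ ∧ ∀ᶠ t in 𝓝 (0 : V),
      DistortionLE μ c (fun x => Ψ x - t) ∧ (∀ x, dist (Ψ x - t) x ≤ ρ) ∧
        MapsTo (fun x => Ψ x - t) Ω Ω := by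
  have hsupp := hasCompactSupport_inwardField T
  have hsmooth : ContDiff ℝ (⊤ : ℕ∞) (inwardField T) := contDiff_inwardField T
  obtain ⟨K, hK⟩ := hsmooth.lipschitzWith_of_hasCompactSupport hsupp (by simp)
  obtain ⟨C, hC⟩ := hsupp.exists_bound_of_continuous hsmooth.continuous
  obtain ⟨ε, hdist, hclose, hmaps⟩ := ((eventually_distortionLE_add_smul_sub μ hc hK).and
    ((eventually_dist_add_smul_sub_le hC hρ).and
      (eventually_mapsTo_add_smul_inwardField hT))).exists
  have hΨ : ContDiff ℝ (⊤ : ℕ∞) fun x => x + ε • inwardField T x :=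
    contDiff_id.add (hsmooth.const_smul ε)
  refine ⟨_, hΨ, ?_⟩
  filter_upwards [hclose, eventually_mapsTo_sub hΩ hΩb hΨ.continuous hmaps] with t ht hmt
  exact ⟨hdist t, ht, hmt⟩

section PerturbationOfSets

variable {X : Type*} [MeasurableSpace X] [MetricSpace X] [OpensMeasurableSpace X] {μ : Measure X}
  [μ.InnerRegularCompactLTTop] {E : Set X}

lemma exists_measure_le_forall_dist_lt_mem_iff (hE : MeasurableSet E) {B : Set X}
    (hB : MeasurableSet B) (hμB : μ B ≠ ∞) {κ : ℝ≥0∞} (hκ : κ ≠ 0) :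
    ∃ N, μ N ≤ κ ∧ ∃ ρ > 0, ∀ x ∈ B, ∀ y ∈ B, dist x y < ρ → x ∉ N → y ∉ N →
      (x ∈ E ↔ y ∈ E) := by
  have hfin (S : Set X) : μ (S ∩ B) ≠ ∞ := measure_ne_top_of_subset inter_subset_right hμB
  obtain ⟨K₁, hK₁E, hK₁, hμK₁⟩ :=
    (hE.inter hB).exists_isCompact_sdiff_lt (hfin E) (ENNReal.half_pos hκ).ne'
  obtain ⟨K₂, hK₂E, hK₂, hμK₂⟩ :=
    (hE.compl.inter hB).exists_isCompact_sdiff_lt (hfin Eᶜ) (ENNReal.half_pos hκ).ne'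
  have hdisj : Disjoint K₁ K₂ :=
    disjoint_left.2 fun x h₁ h₂ => (hK₂E h₂).1 (hK₁E h₁).1
  obtain ⟨ρ, hρ, hthick⟩ := hdisj.exists_thickenings hK₁ hK₂.isClosed
  have hfar {x y : X} (hx : x ∈ K₁) (hy : y ∈ K₂) : ρ ≤ dist x y := by
    by_contra! hxy
    exact disjoint_left.1 hthick (self_subset_thickening hρ _ hx)
      (mem_thickening_iff.2 ⟨y, hy, hxy⟩)
  refine ⟨((E ∩ B) \ K₁) ∪ ((Eᶜ ∩ B) \ K₂), ?_, ρ, hρ, fun x hx y hy hxy hxN hyN => ?_⟩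
  · exact (measure_union_le _ _).trans ((add_le_add hμK₁.le hμK₂.le).trans_eq
      (ENNReal.add_halves κ))
  · have h₁₂ : ¬ (x ∈ K₁ ∧ y ∈ K₂) := fun h => hxy.not_ge (hfar h.1 h.2)
    have h₂₁ : ¬ (y ∈ K₁ ∧ x ∈ K₂) := fun h => hxy.not_ge (dist_comm x y ▸ hfar h.1 h.2)
    simp only [mem_union, Set.mem_sdiff, mem_inter_iff, hx, hy, mem_compl_iff, and_true] at hxN hyN
    tauto

lemma exists_forall_measure_preimage_symmDiff_inter_ball_le [ProperSpace X]
    [IsFiniteMeasureOnCompacts μ] (hE : MeasurableSet E) (c : ℝ≥0) (x₀ : X) (R : ℝ) {κ : ℝ≥0∞}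
    (hκ : κ ≠ 0) :
    ∃ ρ > 0, ∀ Φ : X → X, (∀ B, μ (Φ ⁻¹' B) ≤ c * μ B) → (∀ x, dist (Φ x) x ≤ ρ) →
      μ (((Φ ⁻¹' E) ∆ E) ∩ ball x₀ R) ≤ κ := by
  have hκ' : κ / (c + 1) ≠ 0 := (ENNReal.div_pos hκ (by finiteness)).ne'
  obtain ⟨N, hN, ρ, hρ, hE⟩ := exists_measure_le_forall_dist_lt_mem_iff hE
    (measurableSet_ball (x := x₀) (ε := R + 1)) (measure_ball_lt_top (μ := μ)).ne hκ'
  refine ⟨min (ρ / 2) 1, by positivity, fun Φ hvol hΦ => ?_⟩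
  have hsub : ((Φ ⁻¹' E) ∆ E) ∩ ball x₀ R ⊆ Φ ⁻¹' N ∪ N := by
    rintro x ⟨hxE, hx⟩
    have hΦx : Φ x ∈ ball x₀ (R + 1) := mem_ball.2 <| by
      linarith [dist_triangle (Φ x) x x₀, mem_ball.1 hx, (hΦ x).trans (min_le_right _ _)]
    have hiff := hE _ hΦx x (ball_subset_ball (by linarith) hx)
      (by linarith [(hΦ x).trans (min_le_left _ _)])
    rw [mem_symmDiff, mem_preimage] at hxE
    rw [mem_union, mem_preimage]
    tauto
  calc μ (((Φ ⁻¹' E) ∆ E) ∩ ball x₀ R) ≤ μ (Φ ⁻¹' N) + μ N :=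
        (measure_mono hsub).trans (measure_union_le _ _)
    _ ≤ c * μ N + μ N := by gcongr; exact hvol N
    _ = (c + 1) * μ N := by ring
    _ ≤ (c + 1) * (κ / (c + 1)) := by gcongr
    _ = κ := ENNReal.mul_div_cancel (by simp) (by finiteness)

end PerturbationOfSets

section NonlocalVariation

variable {X : Type*} [MeasurableSpace X] {J : Measure (X × X)}

/-- The nonlocal total variation of `u` for the interaction measure `J`, which only counts the
positive increments. For `u` the indicator of `E` it is the interaction `J (E ×ˢ Eᶜ)`, in the
same way as the total variation of an indicator is a perimeter. -/
noncomputable def nonlocalVariation (J : Measure (X × X)) (u : X → ℝ) : ℝ≥0∞ :=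
  ∫⁻ p, ENNReal.ofReal (u p.1 - u p.2) ∂J

section Superlevel

variable {u : X → ℝ}

lemma measurableSet_superlevel_prod_compl (hu : Measurable u) :
    MeasurableSet {q : (X × X) × ℝ | q.1 ∈ {x | q.2 < u x} ×ˢ {x | q.2 < u x}ᶜ} :=
  (measurableSet_lt measurable_snd (hu.comp (measurable_fst.comp measurable_fst))).inter
    (measurableSet_lt measurable_snd (hu.comp (measurable_snd.comp measurable_fst))).compl

variable [SFinite J]

theorem lintegral_measure_superlevel_prod_compl (hu : Measurable u) :
    ∫⁻ t, J ({x | t < u x} ×ˢ {x | t < u x}ᶜ) = nonlocalVariation J u := by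
  have hD := measurableSet_superlevel_prod_compl hu
  have hslice (p : X × X) :
      {t | p ∈ {x | t < u x} ×ˢ {x | t < u x}ᶜ} = Ico (u p.2) (u p.1) := by
    ext t
    simp only [mem_prod, mem_compl_iff, mem_ofPred_eq, mem_Ico, not_lt, and_comm]
  calc ∫⁻ t, J ({x | t < u x} ×ˢ {x | t < u x}ᶜ)
      = ∫⁻ p, volume {t | p ∈ {x | t < u x} ×ˢ {x | t < u x}ᶜ} ∂J :=
        (Measure.prod_apply_symm hD).symm.trans (Measure.prod_apply hD)
    _ = nonlocalVariation J u := by simp_rw [hslice, Real.volume_Ico, nonlocalVariation]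

lemma exists_mem_Ioo_mul_measure_superlevel_le (hu : Measurable u) {N : Set ℝ}
    (hN : volume N = 0) {a b : ℝ} (hab : a < b) :
    ∃ t ∈ Ioo a b, t ∉ N ∧
      ENNReal.ofReal (b - a) * J ({x | t < u x} ×ˢ {x | t < u x}ᶜ) ≤ nonlocalVariation J u := by
  have hpos : ENNReal.ofReal (b - a) ≠ 0 := by simpa using hab
  have hnull : volume.restrict (Ioo a b) (N ∪ (Ioo a b)ᶜ) = 0 :=
    measure_union_null (Measure.restrict_le_self.absolutelyContinuous hN)
      (by rw [Measure.restrict_apply' measurableSet_Ioo, compl_inter_self, measure_empty])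
  obtain ⟨t, ht, hle⟩ := exists_notMem_null_le_laverage
    (by rwa [Ne, Measure.restrict_eq_zero, Real.volume_Ioo])
    (measurable_measure_prodMk_right (μ := J)
      (measurableSet_superlevel_prod_compl hu)).aemeasurable hnull
  rw [mem_union, mem_compl_iff, not_or, not_not] at ht
  refine ⟨t, ht.2, ht.1, ?_⟩
  rw [setLAverage_eq, Real.volume_Ioo,
    ENNReal.le_div_iff_mul_le (.inl hpos) (.inl ENNReal.ofReal_ne_top), mul_comm] at hle
  exact hle.trans <| (setLIntegral_le_lintegral _ _).trans_eq
    (lintegral_measure_superlevel_prod_compl hu)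

end Superlevel

lemma mul_measure_superlevel_symmDiff_le {μ : Measure X} {u : X → ℝ} (hu : Measurable u)
    {E : Set X} (hE : MeasurableSet E) {δ t : ℝ} (ht : t ∈ Ioo δ (1 - δ)) :
    ENNReal.ofReal δ * μ ({x | t < u x} ∆ E) ≤ ∫⁻ x, ‖u x - E.indicator 1 x‖ₑ ∂μ := by
  refine (mul_le_mul' le_rfl (measure_mono fun x hx => ?_)).trans
    (mul_meas_ge_le_lintegral₀
      (hu.sub (measurable_one.indicator hE)).enorm.aemeasurable (ENNReal.ofReal δ))
  rw [mem_ofPred_eq, ← ofReal_norm, Real.norm_eq_abs, Pi.sub_apply]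
  refine ENNReal.ofReal_le_ofReal (le_abs.2 ?_)
  rcases hx with ⟨hx : t < u x, hxE⟩ | ⟨hxE, hx⟩
  · rw [indicator_of_notMem hxE]
    left
    linarith [ht.1]
  · have hx : u x ≤ t := not_lt.1 hx
    rw [indicator_of_mem hxE, Pi.one_apply]
    right
    linarith [ht.2]

section Perturbation

variable [PseudoMetricSpace X]

lemma nonlocalVariation_sub_le {u g : X → ℝ} (hu : Measurable u) {K : ℝ≥0}
    (hg : LipschitzWith K g) :
    nonlocalVariation J (u - g) ≤
      nonlocalVariation J u + K * ∫⁻ p, ENNReal.ofReal (dist p.1 p.2) ∂J := by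
  rw [nonlocalVariation, nonlocalVariation, ← lintegral_const_mul' _ _ ENNReal.coe_ne_top,
    ← lintegral_add_left (by fun_prop)]
  refine lintegral_mono fun p => ?_
  rw [← ENNReal.ofReal_coe_nnreal, ← ENNReal.ofReal_mul K.coe_nonneg]
  refine (ENNReal.ofReal_le_ofReal ?_).trans ENNReal.ofReal_add_le
  have := (abs_le.1 (hg.dist_le_mul p.1 p.2)).1
  simp only [Pi.sub_apply]
  linarith

end Perturbation

section Average

variable {T : Type*} [MeasurableSpace T] {ν : Measure T} {S : Set (X × T)}

lemma nonlocalVariation_measureReal_le [SFinite J] [IsFiniteMeasure ν] (hS : MeasurableSet S) :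
    nonlocalVariation J (fun x => ν.real (Prod.mk x ⁻¹' S)) ≤
      ∫⁻ t, J (((·, t) ⁻¹' S) ×ˢ ((·, t) ⁻¹' S)ᶜ) ∂ν := by
  let D : Set ((X × X) × T) := {q | (q.1.1, q.2) ∈ S ∧ (q.1.2, q.2) ∉ S}
  have hD : MeasurableSet D :=
    ((by fun_prop : Measurable fun q : (X × X) × T => (q.1.1, q.2)) hS).inter
      ((by fun_prop : Measurable fun q : (X × X) × T => (q.1.2, q.2)) hS).compl
  calc nonlocalVariation J (fun x => ν.real (Prod.mk x ⁻¹' S))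
      ≤ ∫⁻ p, ν (Prod.mk p ⁻¹' D) ∂J := lintegral_mono fun p =>
        (ENNReal.ofReal_sub _ measureReal_nonneg).trans_le <| by
          rw [ofReal_measureReal, ofReal_measureReal]
          exact le_measure_sdiff
    _ = J.prod ν D := (Measure.prod_apply hD).symm
    _ = ∫⁻ t, J (((·, t) ⁻¹' S) ×ˢ ((·, t) ⁻¹' S)ᶜ) ∂ν := Measure.prod_apply_symm hD

lemma lintegral_enorm_measureReal_sub_indicator {μ : Measure X} [SFinite μ]
    [IsProbabilityMeasure ν] (hS : MeasurableSet S) {E : Set X} (hE : MeasurableSet E) :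
    ∫⁻ x, ‖ν.real (Prod.mk x ⁻¹' S) - E.indicator 1 x‖ₑ ∂μ =
      ∫⁻ t, μ (((·, t) ⁻¹' S) ∆ E) ∂ν := by
  have hD : MeasurableSet (S ∆ (E ×ˢ univ)) := hS.symmDiff (hE.prod .univ)
  have hslice (x : X) :
      ‖ν.real (Prod.mk x ⁻¹' S) - E.indicator 1 x‖ₑ = ν (Prod.mk x ⁻¹' (S ∆ (E ×ˢ univ))) := by
    have hSx : MeasurableSet (Prod.mk x ⁻¹' S) := measurable_prodMk_left hS
    rw [preimage_symmDiff, ← ofReal_measureReal]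
    by_cases hx : x ∈ E
    · rw [indicator_of_mem hx, Pi.one_apply, mk_preimage_prod_right hx, ← top_eq_univ,
        symmDiff_top, hnot_eq_compl, probReal_compl_eq_one_sub hSx, ← enorm_neg, neg_sub,
        Real.enorm_of_nonneg (sub_nonneg.2 measureReal_le_one)]
    · rw [indicator_of_notMem hx, sub_zero, mk_preimage_prod_right_eq_empty hx, ← bot_eq_empty,
        symmDiff_bot, Real.enorm_of_nonneg measureReal_nonneg]
  calc ∫⁻ x, ‖ν.real (Prod.mk x ⁻¹' S) - E.indicator 1 x‖ₑ ∂μ = μ.prod ν (S ∆ (E ×ˢ univ)) := by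
        simp_rw [hslice, Measure.prod_apply hD]
    _ = ∫⁻ t, μ (((·, t) ⁻¹' S) ∆ E) ∂ν := by
        rw [Measure.prod_apply_symm hD]
        simp only [preimage_symmDiff, mk_preimage_prod_left (mem_univ _)]

end Average

end NonlocalVariation

section Mollification

variable {V : Type*} [NormedAddCommGroup V] [NormedSpace ℝ V] [FiniteDimensional ℝ V]
  [MeasurableSpace V] [BorelSpace V] (μ : Measure V) [μ.IsAddHaarMeasure]

lemma exists_smoothing_measure [HasContDiffBump V] {S : Set V} (hS : S ∈ 𝓝 0) :
    ∃ ν : Measure V, IsProbabilityMeasure ν ∧ (∀ᵐ t ∂ν, t ∈ S) ∧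
      ∀ f : V → ℝ, LocallyIntegrable f μ →
        ContDiff ℝ (⊤ : ℕ∞) fun z => ∫ t, f (z - t) ∂ν := by
  obtain ⟨r, hr, hrS⟩ := Metric.mem_nhds_iff.1 hS
  let φ : ContDiffBump (0 : V) := ⟨r / 2, r, half_pos hr, half_lt_self hr⟩
  have hφ : Measurable fun t => ENNReal.ofReal (φ.normed μ t) :=
    φ.continuous_normed.measurable.ennreal_ofReal
  refine ⟨μ.withDensity fun t => ENNReal.ofReal (φ.normed μ t), ⟨?_⟩, ?_, fun f hf => ?_⟩
  · rw [withDensity_apply _ .univ, Measure.restrict_univ,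
      ← ofReal_integral_eq_lintegral_ofReal φ.integrable_normed
        (.of_forall φ.nonneg_normed), φ.integral_normed, ENNReal.ofReal_one]
  · rw [ae_withDensity_iff hφ]
    refine .of_forall fun t ht => hrS ?_
    rw [← φ.support_normed_eq (μ := μ)]
    exact fun h => ht (by rw [h, ENNReal.ofReal_zero])
  · convert φ.hasCompactSupport_normed.contDiff_convolution_left (ContinuousLinearMap.lsmul ℝ ℝ)
      (φ.contDiff_normed (μ := μ)) hf with z
    rw [integral_withDensity_eq_integral_toReal_smul hφ (by simp)]
    simp only [ENNReal.toReal_ofReal (φ.nonneg_normed _)]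
    rfl

lemma contDiff_measureReal_preimage_sub {E : Set V} (hE : MeasurableSet E) {ν : Measure V}
    (hν : ∀ f : V → ℝ, LocallyIntegrable f μ → ContDiff ℝ (⊤ : ℕ∞) fun z => ∫ t, f (z - t) ∂ν)
    {Ψ : V → V} (hΨ : ContDiff ℝ (⊤ : ℕ∞) Ψ) :
    ContDiff ℝ (⊤ : ℕ∞) fun x => ν.real {t | Ψ x - t ∈ E} := by
  convert (hν _ ((locallyIntegrable_const (1 : ℝ)).indicator hE)).comp hΨ with x
  exact (integral_indicator_one (measurable_const.sub measurable_id hE)).symm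

lemma exists_one_lt_rpow_mul_sq_mul_le (α : ℝ) {M κ : ℝ≥0∞} (hM : M ≠ ∞) (hκ : κ ≠ 0) :
    ∃ c : ℝ≥0, 1 < c ∧ (c ^ α * c ^ 2 : ℝ≥0) * M ≤ M + κ := by
  have hlim : Tendsto (fun c : ℝ≥0 => ((c ^ α * c ^ 2 : ℝ≥0) : ℝ≥0∞) * M) (𝓝[>] 1) (𝓝 M) := by
    have hc : ContinuousAt (fun c : ℝ≥0 => c ^ α * c ^ 2) 1 := by
      exact (NNReal.continuousAt_rpow_const (.inl one_ne_zero)).mul (continuousAt_id.pow 2)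
    convert ENNReal.Tendsto.mul_const (ENNReal.tendsto_coe.2 (hc.tendsto.mono_left
      nhdsWithin_le_nhds)) (.inr hM) using 2
    simp
  obtain ⟨c, hcM, hc⟩ :=
    ((hlim.eventually_le_const (ENNReal.lt_add_right hM hκ)).and self_mem_nhdsWithin).exists
  exact ⟨c, hc, hcM⟩

theorem LipschitzChart.exists_contDiff_nonlocalVariation_le [HasContDiffBump V] {Ω : Set V}
    (hΩ : IsOpen Ω) (hΩb : IsBounded Ω) {T : Finset (LipschitzChart Ω)}
    (hT : frontier Ω ⊆ ⋃ c ∈ T, ball c.center c.radius) {E : Set V} (hE : MeasurableSet E)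
    {α : ℝ} (hα : 0 < α) (hM : (rieszMeasure μ α).restrict (Ω ×ˢ Ω) (E ×ˢ Eᶜ) ≠ ∞)
    (x₀ : V) (R : ℝ) {κ : ℝ≥0∞} (hκ : κ ≠ 0) :
    ∃ u : V → ℝ, ContDiff ℝ (⊤ : ℕ∞) u ∧
      nonlocalVariation ((rieszMeasure μ α).restrict (Ω ×ˢ Ω)) u ≤
        (rieszMeasure μ α).restrict (Ω ×ˢ Ω) (E ×ˢ Eᶜ) + κ ∧
      ∫⁻ x in ball x₀ R, ‖u x - E.indicator 1 x‖ₑ ∂μ ≤ κ := by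
  obtain ⟨c, hc, hcM⟩ := exists_one_lt_rpow_mul_sq_mul_le α hM hκ
  obtain ⟨ρ, hρ, hL1⟩ := exists_forall_measure_preimage_symmDiff_inter_ball_le (μ := μ) hE c x₀ R hκ
  obtain ⟨Ψ, hΨ, hΨt⟩ := exists_deformation μ hΩ hΩb hT hc hρ
  obtain ⟨ν, hν, hνΨ, hνsmooth⟩ := exists_smoothing_measure μ hΨt
  have hS : MeasurableSet {p : V × V | Ψ p.1 - p.2 ∈ E} :=
    (hΨ.continuous.measurable.comp measurable_fst).sub measurable_snd hE
  refine ⟨_, contDiff_measureReal_preimage_sub μ hE hνsmooth hΨ, ?_, ?_⟩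
  · refine (nonlocalVariation_measureReal_le hS).trans
      (lintegral_le_const (hνΨ.mono fun t ht => ?_))
    exact (ht.1.restrict_rieszMeasure_prod_compl_le hα hE hΩ.measurableSet ht.2.2).trans hcM
  · refine (lintegral_enorm_measureReal_sub_indicator hS hE).trans_le
      (lintegral_le_const (hνΨ.mono fun t ht => ?_))
    rw [Measure.restrict_apply' measurableSet_ball]
    exact hL1 _ ht.1.measure_preimage_le ht.2.1

end Mollification

section RegularLevels

open scoped Gradient

/-- The set of values which `f` takes at its critical points. -/
def criticalValues {V : Type*} [NormedAddCommGroup V] [NormedSpace ℝ V] (f : V → ℝ) : Set ℝ :=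
  f '' {x | fderiv ℝ f x = 0}

lemma hasSmoothBoundary_superlevel {n : ℕ} {f : EuclideanSpace ℝ (Fin n) → ℝ}
    (hf : ContDiff ℝ (⊤ : ℕ∞) f) {t : ℝ} (ht : t ∉ criticalValues f) :
    HasSmoothBoundary {x | t < f x} :=
  ⟨f, t, hf, fun x hx hx0 => ht ⟨x, hx0, hx⟩, rfl⟩

lemma countable_setOf_eq_of_antilipschitzWith_fderiv {V W : Type*} [NormedAddCommGroup V]
    [NormedSpace ℝ V] [SecondCountableTopology V] [NormedAddCommGroup W] [NormedSpace ℝ W]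
    {G : V → W} (hG : Differentiable ℝ G) {a : W}
    (h : ∀ x, G x = a → ∃ C, AntilipschitzWith C (fderiv ℝ G x)) : {x | G x = a}.Countable := by
  have hdiscrete : IsDiscrete {x | G x = a} := isDiscrete_iff_nhdsNE.2 fun x hx => by
    rw [inf_principal_eq_bot]
    exact (hG x).hasFDerivAt.eventually_ne (h x hx)
  exact (HereditarilyLindelofSpace.isLindelof _).countable hdiscrete.to_subtype

variable {V : Type*} [NormedAddCommGroup V] [InnerProductSpace ℝ V] [FiniteDimensional ℝ V]

/-- The gradient of `u` has a regular value `a` arbitrarily close to `0` by Sard's theorem, and the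
critical points of `u - ⟪a, ·⟫` are the points where the gradient equals `a`. -/
theorem exists_countable_criticalValues_sub {u : V → ℝ} (hu : ContDiff ℝ 2 u) {θ : ℝ}
    (hθ : 0 < θ) : ∃ l : V →L[ℝ] ℝ, ‖l‖ < θ ∧ (criticalValues (u - ⇑l)).Countable := by
  borelize V
  have hgrad : Differentiable ℝ (∇ u) := (InnerProductSpace.toDual ℝ V).symm.differentiable.comp
    ((hu.fderiv_right (m := 1) (by norm_num)).differentiable one_ne_zero)
  have hnull : (volume : Measure V) (∇ u '' {x | (fderiv ℝ (∇ u) x).det = 0}) = 0 :=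
    addHaar_image_eq_zero_of_det_fderivWithin_eq_zero volume
      (fun x _ => (hgrad x).hasFDerivAt.hasFDerivWithinAt) fun x hx => hx
  obtain ⟨a, ha, hareg⟩ : (ball (0 : V) θ \ ∇ u '' {x | (fderiv ℝ (∇ u) x).det = 0}).Nonempty :=
    nonempty_of_measure_ne_zero (μ := volume)
      (by rw [measure_sdiff_null hnull]; exact (measure_ball_pos _ _ hθ).ne')
  have hcrit : {x | fderiv ℝ (u - ⇑(innerSL ℝ a)) x = 0} ⊆ {x | ∇ u x = a} := fun x hx => by
    rw [mem_ofPred_eq, fderiv_sub (hu.differentiable two_ne_zero x)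
      (innerSL ℝ a).differentiableAt, ContinuousLinearMap.fderiv, sub_eq_zero] at hx
    exact (InnerProductSpace.toDual ℝ V).injective (toDual_gradient.trans hx)
  have hcount : {x | ∇ u x = a}.Countable :=
    countable_setOf_eq_of_antilipschitzWith_fderiv hgrad fun x hx =>
      ⟨_, ((fderiv ℝ (∇ u) x).toContinuousLinearEquivOfDetNeZero
        fun h => hareg ⟨x, h, hx⟩).antilipschitz⟩
  exact ⟨innerSL ℝ a, by simpa using ha, (hcount.mono hcrit).image _⟩

lemma exists_contDiff_countable_criticalValues [MeasurableSpace V] [BorelSpace V]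
    {J : Measure (V × V)} (hJ : ∫⁻ p, ENNReal.ofReal (dist p.1 p.2) ∂J ≠ ∞) {m : Measure V}
    (hm : ∫⁻ x, ‖x‖ₑ ∂m ≠ ∞) {k : WithTop ℕ∞} (hk : 2 ≤ k) {u : V → ℝ} (hu : ContDiff ℝ k u)
    {κ : ℝ≥0∞} (hκ : κ ≠ 0) :
    ∃ f : V → ℝ, ContDiff ℝ k f ∧ (criticalValues f).Countable ∧
      nonlocalVariation J f ≤ nonlocalVariation J u + κ ∧
      ∀ g : V → ℝ, ∫⁻ x, ‖f x - g x‖ₑ ∂m ≤ ∫⁻ x, ‖u x - g x‖ₑ ∂m + κ := by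
  obtain ⟨θ, hθ, hθκ⟩ := ENNReal.exists_nnreal_pos_mul_lt (ENNReal.add_ne_top.2 ⟨hJ, hm⟩) hκ
  obtain ⟨l, hl, hcrit⟩ := exists_countable_criticalValues_sub (hu.of_le hk) (NNReal.coe_pos.2 hθ)
  rw [mul_add] at hθκ
  have hlθ : ‖l‖₊ ≤ θ := hl.le
  refine ⟨u - l, hu.sub l.contDiff, hcrit, ?_, fun g => ?_⟩
  · exact (nonlocalVariation_sub_le hu.continuous.measurable (l.lipschitz.weaken hlθ)).trans
      (add_le_add_right (le_self_add.trans hθκ.le) _)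
  · calc ∫⁻ x, ‖(u - l) x - g x‖ₑ ∂m
        ≤ ∫⁻ x, (‖u x - g x‖ₑ + θ * ‖x‖ₑ) ∂m := lintegral_mono fun x => by
          rw [Pi.sub_apply, sub_right_comm]
          refine enorm_sub_le.trans (add_le_add_right ?_ _)
          rw [enorm_eq_nnnorm, enorm_eq_nnnorm]
          exact_mod_cast (l.le_opNNNorm x).trans (mul_le_mul_left hlθ _)
      _ = ∫⁻ x, ‖u x - g x‖ₑ ∂m + θ * ∫⁻ x, ‖x‖ₑ ∂m := by
          rw [lintegral_add_right _ (by fun_prop), lintegral_const_mul _ measurable_enorm]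
      _ ≤ ∫⁻ x, ‖u x - g x‖ₑ ∂m + κ := by
          gcongr
          exact le_add_self.trans hθκ.le

end RegularLevels

section RecoverySequence

/-- When a level is picked in `(δ, 1 - δ)`, averaging over the levels costs the factor `1 - δ - δ`
and Chebyshev's inequality the factor `δ`. The error `κ` absorbs both. -/
lemma exists_level_constants {M ε : ℝ≥0∞} (hM : M ≠ ∞) (hε : ε ≠ 0) :
    ∃ δ : ℝ, 0 < δ ∧ δ < 1 - δ ∧ ∃ κ ≠ 0,
      M + κ ≤ ENNReal.ofReal (1 - δ - δ) * (M + ε) ∧ κ ≤ ENNReal.ofReal δ * ε := by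
  have hlim : Tendsto (fun δ : ℝ => ENNReal.ofReal (1 - δ - δ) * (M + ε)) (𝓝[>] 0)
      (𝓝 (M + ε)) := by
    have hδ : Continuous fun δ : ℝ => ENNReal.ofReal (1 - δ - δ) :=
      ENNReal.continuous_ofReal.comp (by fun_prop)
    convert ENNReal.Tendsto.mul_const ((hδ.tendsto 0).mono_left nhdsWithin_le_nhds)
      (.inl (by simp)) using 2
    simp
  obtain ⟨δ, hδM, hδ, hδ2⟩ := ((hlim.eventually_const_lt (ENNReal.lt_add_right hM hε)).and
    (Ioo_mem_nhdsGT (one_half_pos (α := ℝ)))).exists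
  refine ⟨δ, hδ, by linarith, min (ENNReal.ofReal (1 - δ - δ) * (M + ε) - M)
    (ENNReal.ofReal δ * ε), ?_, ?_, min_le_right _ _⟩
  · exact (lt_min (tsub_pos_of_lt hδM) (ENNReal.mul_pos (by simpa using hδ) hε)).ne'
  · exact (add_le_add_right (min_le_left _ _) M).trans_eq (add_tsub_cancel_of_le hδM.le)

lemma exists_forall_exists_superlevel_le {X : Type*} [MeasurableSpace X] (J : Measure (X × X))
    [SFinite J] (m : Measure X) {M ε : ℝ≥0∞} (hM : M ≠ ∞) (hε : ε ≠ 0) :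
    ∃ κ ≠ 0, ∀ {u : X → ℝ} {E : Set X} {N : Set ℝ}, Measurable u → MeasurableSet E →
      volume N = 0 → nonlocalVariation J u ≤ M + κ →
      ∫⁻ x, ‖u x - E.indicator 1 x‖ₑ ∂m ≤ κ →
      ∃ t ∉ N, J ({x | t < u x} ×ˢ {x | t < u x}ᶜ) ≤ M + ε ∧ m ({x | t < u x} ∆ E) ≤ ε := by
  obtain ⟨δ, hδ, hδ1, κ, hκ, hκM, hκε⟩ := exists_level_constants hM hε
  refine ⟨κ, hκ, fun hu hE hN hJ hm => ?_⟩
  obtain ⟨t, ht, htN, htJ⟩ := exists_mem_Ioo_mul_measure_superlevel_le (J := J) hu hN hδ1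
  refine ⟨t, htN, ?_, ?_⟩
  · exact (ENNReal.mul_le_mul_iff_right (ENNReal.ofReal_pos.2 (sub_pos.2 hδ1)).ne'
      ENNReal.ofReal_ne_top).1
      (htJ.trans (hJ.trans hκM))
  · exact (ENNReal.mul_le_mul_iff_right (ENNReal.ofReal_pos.2 hδ).ne'
      ENNReal.ofReal_ne_top).1
      ((mul_measure_superlevel_symmDiff_le hu hE ht).trans (hm.trans hκε))

theorem LipschitzChart.exists_regular_superlevel {V : Type*} [NormedAddCommGroup V]
    [InnerProductSpace ℝ V] [FiniteDimensional ℝ V] [Nontrivial V] [MeasurableSpace V]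
    [BorelSpace V] (μ : Measure V) [μ.IsAddHaarMeasure] {Ω : Set V} (hΩ : IsOpen Ω)
    (hΩb : IsBounded Ω) {T : Finset (LipschitzChart Ω)}
    (hT : frontier Ω ⊆ ⋃ c ∈ T, ball c.center c.radius) {s : ℝ} (hs : s ∈ Ioo (0 : ℝ) 1)
    {E : Set V} (hE : MeasurableSet E)
    (hM : (rieszMeasure μ (Module.finrank ℝ V + s)).restrict (Ω ×ˢ Ω) (E ×ˢ Eᶜ) ≠ ∞)
    (R : ℝ) {ε : ℝ≥0∞} (hε : ε ≠ 0) :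
    ∃ (f : V → ℝ) (t : ℝ), ContDiff ℝ (⊤ : ℕ∞) f ∧ t ∉ criticalValues f ∧
      (rieszMeasure μ (Module.finrank ℝ V + s)).restrict (Ω ×ˢ Ω)
        ({x | t < f x} ×ˢ {x | t < f x}ᶜ) ≤
        (rieszMeasure μ (Module.finrank ℝ V + s)).restrict (Ω ×ˢ Ω) (E ×ˢ Eᶜ) + ε ∧
      μ (({x | t < f x} ∆ E) ∩ ball 0 R) ≤ ε := by
  obtain ⟨κ, hκ, hlevel⟩ := exists_forall_exists_superlevel_le
    ((rieszMeasure μ (Module.finrank ℝ V + s)).restrict (Ω ×ˢ Ω)) (μ.restrict (ball 0 R)) hM hε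
  have hκ2 : κ / 2 ≠ 0 := (ENNReal.half_pos hκ).ne'
  have hnorm : ∫⁻ x in ball (0 : V) R, ‖x‖ₑ ∂μ ≠ ∞ :=
    ((continuous_id.locallyIntegrable.integrableOn_isCompact
      (isCompact_closedBall 0 R)).mono_set ball_subset_closedBall).2.ne
  obtain ⟨u, hu, huM, huE⟩ := exists_contDiff_nonlocalVariation_le μ hΩ hΩb hT hE
    (add_pos (Nat.cast_pos.2 Module.finrank_pos) hs.1) hM 0 R hκ2
  obtain ⟨f, hf, hcrit, hfu, hfg⟩ := exists_contDiff_countable_criticalValues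
    (setLIntegral_dist_rieszMeasure_ne_top μ hs hΩ.measurableSet hΩb) hnorm (by norm_cast) hu hκ2
  obtain ⟨t, ht, htJ, htE⟩ := hlevel hf.continuous.measurable hE (hcrit.measure_zero volume)
    (hfu.trans <| (add_le_add_left huM _).trans_eq (by rw [add_assoc, ENNReal.add_halves]))
    ((hfg _).trans <| (add_le_add_left huE _).trans_eq (ENNReal.add_halves κ))
  rw [Measure.restrict_apply' measurableSet_ball] at htE
  exact ⟨f, t, hf, ht, htJ, htE⟩

namespace HasLipschitzBoundary

variable {n : ℕ} {s : ℝ} {Ω E : Set (EuclideanSpace ℝ (Fin n))}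

lemma rieszMeasure_cross_ne_top (h : HasLipschitzBoundary Ω) (hn : 1 ≤ n)
    (hs : s ∈ Ioo (0 : ℝ) 1) (hΩ : MeasurableSet Ω) (hΩb : IsBounded Ω) :
    rieszMeasure volume (n + s) (Ω ×ˢ Ωᶜ ∪ Ωᶜ ×ˢ Ω) ≠ ∞ := by
  have : NeZero n := ⟨by omega⟩
  obtain ⟨T, hT⟩ := h.exists_finset_charts hΩb
  simpa only [finrank_euclideanSpace_fin] using
    LipschitzChart.rieszMeasure_cross_ne_top volume hs hΩ hΩb hT

lemma exists_hasSmoothBoundary_le (h : HasLipschitzBoundary Ω) (hn : 1 ≤ n)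
    (hs : s ∈ Ioo (0 : ℝ) 1) (hΩ : IsOpen Ω) (hΩb : IsBounded Ω) (hE : MeasurableSet E)
    (hM : (rieszMeasure volume (n + s)).restrict (Ω ×ˢ Ω) (E ×ˢ Eᶜ) ≠ ∞) (R : ℝ) {ε : ℝ≥0∞}
    (hε : ε ≠ 0) :
    ∃ F, HasSmoothBoundary F ∧ (rieszMeasure volume (n + s)).restrict (Ω ×ˢ Ω) (F ×ˢ Fᶜ) ≤
      (rieszMeasure volume (n + s)).restrict (Ω ×ˢ Ω) (E ×ˢ Eᶜ) + ε ∧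
      volume ((F ∆ E) ∩ ball 0 R) ≤ ε := by
  have : NeZero n := ⟨by omega⟩
  obtain ⟨T, hT⟩ := h.exists_finset_charts hΩb
  obtain ⟨f, t, hf, ht, hF⟩ := LipschitzChart.exists_regular_superlevel volume hΩ hΩb hT hs hE
    (by rwa [finrank_euclideanSpace_fin]) R hε
  rw [finrank_euclideanSpace_fin] at hF
  exact ⟨_, hasSmoothBoundary_superlevel hf ht, hF⟩

theorem exists_recovery_sequence (h : HasLipschitzBoundary Ω) (hn : 1 ≤ n)
    (hs : s ∈ Ioo (0 : ℝ) 1) (hΩ : IsOpen Ω) (hΩb : IsBounded Ω) (hE : MeasurableSet E)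
    (hfin : Ps n s E Ω ≠ ∞) :
    ∃ F : ℕ → Set (EuclideanSpace ℝ (Fin n)), (∀ k, HasSmoothBoundary (F k)) ∧ LocConv n F E ∧
      limsup (fun k => Ps n s (F k) Ω) atTop ≤ Ps n s E Ω := by
  have hΩm := hΩ.measurableSet
  have hEm := Ps_eq_perimeterMeasure (s := s) hE hΩm
  simp only [perimeterMeasure, Measure.add_apply] at hEm
  have hM := (ENNReal.add_ne_top.1 (hEm ▸ hfin)).1
  choose F hF hFM hFE using fun k : ℕ => h.exists_hasSmoothBoundary_le hn hs hΩ hΩb hE hM k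
    (ENNReal.pow_pos (ENNReal.inv_pos.2 ENNReal.ofNat_ne_top) k : (0 : ℝ≥0∞) < 2⁻¹ ^ k).ne'
  refine ⟨F, hF, locConv_of_volume_inter_ball_le hFE, ?_⟩
  have : IsFiniteMeasure ((rieszMeasure volume (n + s)).restrict (Ω ×ˢ Ωᶜ ∪ Ωᶜ ×ˢ Ω)) :=
    isFiniteMeasure_restrict.2 (h.rieszMeasure_cross_ne_top hn hs hΩm hΩb)
  have hac : (rieszMeasure volume (n + s)).restrict (Ω ×ˢ Ωᶜ ∪ Ωᶜ ×ˢ Ω) ≪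
      Measure.prod volume volume :=
    (Measure.absolutelyContinuous_of_le Measure.restrict_le_self).trans
      (rieszMeasure_absolutelyContinuous _)
  have hcross := tendsto_measure_prod_compl hac hE (fun k => (hF k).measurableSet)
    (ae_eventually_mem_iff_of_measure_inter_ball_le 0 hFE)
  have hpow : Tendsto (fun k : ℕ => (2⁻¹ : ℝ≥0∞) ^ k) atTop (𝓝 0) :=
    ENNReal.tendsto_pow_atTop_nhds_zero_of_lt_one (by simp)
  have hlim := (hpow.const_add
    ((rieszMeasure volume (n + s)).restrict (Ω ×ˢ Ω) (E ×ˢ Eᶜ))).add hcross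
  rw [add_zero, ← hEm] at hlim
  refine (limsup_le_limsup (.of_forall fun k => ?_)).trans_eq hlim.limsup_eq
  rw [Ps_eq_perimeterMeasure (hF k).measurableSet hΩm, perimeterMeasure, Measure.add_apply]
  exact add_le_add_left (hFM k) _

end HasLipschitzBoundary

end RecoverySequence

/-- Corollary 1.4: for a bounded open set `Ω` with Lipschitz boundary,
the `s`-perimeter in `Ω` is the relaxation, with respect to local convergence in measure,
of the `s`-perimeter of smooth open sets. -/
theorem fractional_perimeter_as_relaxation
    (n : ℕ) (hn : 1 ≤ n) (s : ℝ) (hs : s ∈ Set.Ioo (0 : ℝ) 1)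
    (Ω : Set (EuclideanSpace ℝ (Fin n))) (hΩo : IsOpen Ω) (hΩb : IsBounded Ω)
    (hΩlip : HasLipschitzBoundary Ω)
    (E : Set (EuclideanSpace ℝ (Fin n))) (hE : MeasurableSet E) :
    Ps n s E Ω = ⨅ (Eh : ℕ → Set (EuclideanSpace ℝ (Fin n)))
      (_ : ∀ h, HasSmoothBoundary (Eh h)) (_ : LocConv n Eh E),
        Filter.liminf (fun h => Ps n s (Eh h) Ω) atTop := by
  refine le_antisymm ?_ ?_
  · exact le_iInf fun Eh => le_iInf fun hsmooth => le_iInf fun hloc =>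
      hloc.Ps_le_liminf hΩo.measurableSet hE fun k => (hsmooth k).measurableSet
  · by_cases hfin : Ps n s E Ω = ∞
    · exact hfin ▸ le_top
    · obtain ⟨F, hsmooth, hloc, hlimsup⟩ :=
        hΩlip.exists_recovery_sequence hn hs hΩo hΩb hE hfin
      exact iInf_le_of_le F <| iInf_le_of_le hsmooth <| iInf_le_of_le hloc <|
        le_trans liminf_le_limsup hlimsup
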